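/- arXiv:0912.0875 — 2 statements merged into one kernel-verified Lean document; each statement's English description precedes it below -/
import Mathlib

section
/- Let G be a finite group and let N be a nonsolvable normal subgroup of G. Then T(G) ≥ 6·T(G/N), where T(H) denotes the sum of the degrees of the complex irreducible characters of a finite group H. -/
/-- `χ : G → ℂ` is an irreducible complex character of the group `G`, i.e. the character
of a simple (irreducible) finite-dimensional complex representation of `G`. -/
def IsIrrChar (G : Type) [Group G] (χ : G → ℂ) : Prop :=
  ∃ V : FDRep ℂ G, CategoryTheory.Simple V ∧ χ = V.character

/-- `T(G)`: the sum of the degrees (values at the identity) of the complex irreducible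
characters of `G`. -/
noncomputable def charDegreeSum (G : Type) [Group G] : ℝ :=
  ∑ᶠ χ ∈ {χ : G → ℂ | IsIrrChar G χ}, (χ 1).re

namespace DegSum

/-- Inner product of functions on a finite group. -/
noncomputable def ip {G : Type} [Group G] [Fintype G] (a b : G → ℂ) : ℂ :=
  (Nat.card G : ℂ)⁻¹ * ∑ g : G, a g * b g⁻¹

section basic
variable {G : Type} [Group G] [Fintype G]

lemma ip_add_left (a a' b : G → ℂ) : ip (a + a') b = ip a b + ip a' b := by
  simp [ip, add_mul, Finset.sum_add_distrib, mul_add]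

lemma ip_smul_left (c : ℂ) (a b : G → ℂ) : ip (c • a) b = c * ip a b := by
  simp only [ip, Pi.smul_apply, smul_eq_mul, Finset.mul_sum]
  refine Finset.sum_congr rfl fun g _ => by ring

lemma ip_zero_left (b : G → ℂ) : ip 0 b = 0 := by simp [ip]

lemma ip_comm (a b : G → ℂ) : ip a b = ip b a := by
  unfold ip
  congr 1
  rw [← Equiv.sum_comp (Equiv.inv G)]
  simp [mul_comm]

lemma ip_sum_left {ι : Type*} (s : Finset ι) (f : ι → G → ℂ) (b : G → ℂ) :
    ip (∑ i ∈ s, f i) b = ∑ i ∈ s, ip (f i) b := by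
  classical
  induction s using Finset.induction_on with
  | empty => simp [ip_zero_left]
  | insert i s hi ih => rw [Finset.sum_insert hi, Finset.sum_insert hi, ip_add_left, ih]

lemma ip_irr_self {χ : G → ℂ} (h : IsIrrChar G χ) : ip χ χ = 1 := by
  obtain ⟨V, hV, rfl⟩ := h
  have := (FDRep.simple_iff_char_is_norm_one V).1 hV
  rw [ip, this]
  exact inv_mul_cancel₀ (by exact_mod_cast Nat.card_pos.ne')

lemma ip_irr_ne {χ ψ : G → ℂ} (h : IsIrrChar G χ) (h' : IsIrrChar G ψ) (hne : χ ≠ ψ) :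
    ip χ ψ = 0 := by
  obtain ⟨V, hV, rfl⟩ := h
  obtain ⟨W, hW, rfl⟩ := h'
  have := invertibleOfNonzero (NeZero.ne (Nat.card G : ℂ))
  rw [ip, FDRep.char_orthonormal V W, if_neg]
  rintro ⟨i⟩
  exact hne (FDRep.char_iso i)

lemma irr_finite : {χ : G → ℂ | IsIrrChar G χ}.Finite := by
  have : LinearIndependent ℂ (fun χ : {χ : G → ℂ | IsIrrChar G χ} => (χ : G → ℂ)) := by
    rw [linearIndependent_iff']
    intro s g hs i hi
    have := congrArg (fun a => ip a i.1) hs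
    simp only [ip_sum_left, ip_smul_left, ip_zero_left] at this
    rw [Finset.sum_eq_single_of_mem i hi] at this
    · rwa [ip_irr_self i.2, mul_one] at this
    · intro j _ hj
      rw [ip_irr_ne j.2 i.2 (fun h => hj (Subtype.ext h)), mul_zero]
  exact this.setFinite

/-- The finset of irreducible characters. -/
noncomputable def irr (G : Type) [Group G] [Fintype G] : Finset (G → ℂ) :=
  (irr_finite (G := G)).toFinset

lemma mem_irr {χ : G → ℂ} : χ ∈ irr G ↔ IsIrrChar G χ := by simp [irr]

lemma charDegreeSum_eq : charDegreeSum G = ∑ χ ∈ irr G, (χ 1).re := by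
  unfold charDegreeSum
  exact finsum_mem_eq_finite_toFinset_sum _ _

/-- Sums of irreducible characters. -/
def chars (G : Type) [Group G] : AddSubmonoid (G → ℂ) :=
  AddSubmonoid.closure {χ | IsIrrChar G χ}

lemma character_add {V : Type} [AddCommGroup V] [Module ℂ V] [FiniteDimensional ℂ V]
    (ρ : Representation ℂ G V) (σ τ : Subrepresentation ρ) (h : IsCompl σ τ) :
    ρ.character = σ.toRepresentation.character + τ.toRepresentation.character := by
  have h' : IsCompl σ.toSubmodule τ.toSubmodule := by
    constructor
    · rw [disjoint_iff]
      have := h.1.eq_bot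
      rw [← Subrepresentation.toSubmodule_inf, this]; rfl
    · rw [codisjoint_iff]
      have := h.2.eq_top
      rw [← Subrepresentation.toSubmodule_sup, this]; rfl
  ext g
  simp only [Representation.character, Pi.add_apply]
  rw [← LinearMap.trace_prodMap', ← LinearMap.trace_conj' _ (Submodule.prodEquivOfIsCompl _ _ h')]
  congr 1
  have key : ∀ v, ρ g (Submodule.prodEquivOfIsCompl _ _ h' v) = Submodule.prodEquivOfIsCompl _ _ h'
      (((σ.toRepresentation g).prodMap (τ.toRepresentation g)) v) := by
    rintro ⟨v, w⟩
    simp [Submodule.coe_prodEquivOfIsCompl', Subrepresentation.toRepresentation]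
  refine LinearMap.ext fun v => ?_
  rw [LinearEquiv.conj_apply_apply, ← key, LinearEquiv.apply_symm_apply]

lemma simple_of_irreducible {V : Type} [AddCommGroup V] [Module ℂ V] [FiniteDimensional ℂ V]
    (ρ : Representation ℂ G V) [ρ.IsIrreducible] : IsIrrChar G ρ.character := by
  refine ⟨FDRep.of ρ, ?_, rfl⟩
  rw [FDRep.simple_iff_char_is_norm_one]
  have := invertibleOfNonzero (NeZero.ne (Nat.card G : ℂ))
  have h := Representation.card_inv_mul_sum_char_mul_char_eq_finrank ρ ρ
  rw [Representation.IsIrreducible.finrank_intertwiningMap_self, inv_mul_eq_iff_eq_mul₀ (NeZero.ne _)] at h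
  rw [Nat.cast_one, mul_one] at h
  exact h

lemma character_mem_chars (n : ℕ) : ∀ (V : Type) [AddCommGroup V] [Module ℂ V] [FiniteDimensional ℂ V]
    (ρ : Representation ℂ G V), Module.finrank ℂ V = n → ρ.character ∈ chars G := by
  induction n using Nat.strong_induction_on with
  | _ n ih =>
    intro V _ _ _ ρ hn
    by_cases hirr : ρ.IsIrreducible
    · exact AddSubmonoid.subset_closure (simple_of_irreducible ρ)
    rcases subsingleton_or_nontrivial V with hs | hnt
    · have : ρ.character = 0 := by
        ext g
        have : ρ g = 0 := Subsingleton.elim _ _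
        simp [Representation.character, this]
      rw [this]; exact zero_mem _
    · have hnt' : Nontrivial (Subrepresentation ρ) := by
        refine ⟨⊥, ⊤, fun h => ?_⟩
        have h2 : (⊥ : Submodule ℂ V) = ⊤ := congrArg Subrepresentation.toSubmodule h
        exact bot_ne_top h2
      have : ∃ σ : Subrepresentation ρ, σ ≠ ⊥ ∧ σ ≠ ⊤ := by
        by_contra hcon
        push Not at hcon
        exact hirr ⟨fun a => or_iff_not_imp_left.2 (hcon a)⟩
      obtain ⟨σ, hb, ht⟩ := this
      obtain ⟨τ, hτ⟩ := exists_isCompl σ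
      rw [character_add ρ σ τ hτ]
      have hlt : ∀ σ : Subrepresentation ρ, σ ≠ ⊤ → Module.finrank ℂ σ.toSubmodule < n := by
        intro σ hσ
        rw [← hn]
        apply Submodule.finrank_lt
        intro h
        exact hσ (Subrepresentation.toSubmodule_injective h)
      refine add_mem (ih _ (hlt σ ht) _ _ rfl) (ih _ (hlt τ ?_) _ _ rfl)
      rintro rfl
      have := hτ.1.eq_bot
      exact hb (by rwa [inf_top_eq] at this)

lemma chars_of_rep {V : Type} [AddCommGroup V] [Module ℂ V] [FiniteDimensional ℂ V]
    (ρ : Representation ℂ G V) : ρ.character ∈ chars G := character_mem_chars _ V ρ rfl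

lemma irr_mem_chars {χ : G → ℂ} (h : IsIrrChar G χ) : χ ∈ chars G := AddSubmonoid.subset_closure h

lemma chars_mul {a b : G → ℂ} (ha : a ∈ chars G) (hb : b ∈ chars G) : a * b ∈ chars G := by
  induction ha using AddSubmonoid.closure_induction with
  | zero => rw [zero_mul]; exact zero_mem _
  | add x y _ _ hx hy => rw [add_mul]; exact add_mem hx hy
  | mem x hx =>
    induction hb using AddSubmonoid.closure_induction with
    | zero => rw [mul_zero]; exact zero_mem _
    | add x y _ _ hx hy => rw [mul_add]; exact add_mem hx hy
    | mem y hy =>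
      obtain ⟨V, hV, rfl⟩ := hx
      obtain ⟨W, hW, rfl⟩ := hy
      have := chars_of_rep (Representation.tprod (V.ρ : Representation ℂ G V) (W.ρ : Representation ℂ G W))
      rwa [Representation.char_tensor] at this

lemma chars_expand {a : G → ℂ} (ha : a ∈ chars G) : a = ∑ ψ ∈ irr G, ip a ψ • ψ := by
  induction ha using AddSubmonoid.closure_induction with
  | zero => simp [ip_zero_left]
  | add x y _ _ hx hy =>
    conv_lhs => rw [hx, hy]
    simp [ip_add_left, add_smul, Finset.sum_add_distrib]
  | mem x hx =>
    rw [Finset.sum_eq_single_of_mem x (mem_irr.2 hx), ip_irr_self hx, one_smul]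
    intro ψ hψ hne
    rw [ip_irr_ne hx (mem_irr.1 hψ) hne.symm, zero_smul]

lemma chars_ip_nat {a ψ : G → ℂ} (ha : a ∈ chars G) (hψ : IsIrrChar G ψ) : ∃ n : ℕ, ip a ψ = n := by
  induction ha using AddSubmonoid.closure_induction with
  | zero => exact ⟨0, by simp [ip_zero_left]⟩
  | add x y _ _ hx hy =>
    obtain ⟨n, hn⟩ := hx
    obtain ⟨m, hm⟩ := hy
    exact ⟨n + m, by rw [ip_add_left, hn, hm]; push_cast; rfl⟩
  | mem x hx =>
    by_cases h : x = ψ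
    · subst h; exact ⟨1, by simp [ip_irr_self hx]⟩
    · exact ⟨0, by simp [ip_irr_ne hx hψ h]⟩

lemma irr_deg {χ : G → ℂ} (h : IsIrrChar G χ) : ∃ n : ℕ, 0 < n ∧ χ 1 = n := by
  obtain ⟨V, hV, rfl⟩ := h
  refine ⟨Module.finrank ℂ V, ?_, FDRep.char_one V⟩
  rw [Nat.pos_iff_ne_zero]
  intro h0
  have hs : Subsingleton V := Module.finrank_zero_iff.1 h0
  have h1 := (FDRep.simple_iff_char_is_norm_one V).1 hV
  have : V.character = 0 := by
    ext g
    have : V.ρ g = 0 := Subsingleton.elim _ _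
    simp [FDRep.character, this]
  rw [this] at h1
  simp only [Pi.zero_apply, mul_zero, Finset.sum_const_zero] at h1
  exact NeZero.ne (Nat.card G : ℂ) h1.symm

/-- The permutation character. -/
noncomputable def perm (G X : Type) [Group G] [MulAction G X] (g : G) : ℂ :=
  (Nat.card (MulAction.fixedBy X g) : ℂ)

lemma perm_mem_chars (X : Type) [Finite X] [MulAction G X] : perm G X ∈ chars G := by
  classical
  have := Fintype.ofFinite X
  let ρ : Representation ℂ G (X → ℂ) :=
    { toFun := fun g => LinearMap.funLeft ℂ ℂ (fun x => g⁻¹ • x)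
      map_one' := by ext; simp [LinearMap.funLeft]
      map_mul' := fun a b => by
        refine LinearMap.ext fun f => funext fun x => ?_
        simp [LinearMap.funLeft, mul_smul] }
  have h := chars_of_rep ρ
  convert! h using 1
  ext g
  rw [Representation.character, LinearMap.trace_eq_matrix_trace ℂ (Pi.basisFun ℂ X), Matrix.trace]
  have : ∀ x, (LinearMap.toMatrix (Pi.basisFun ℂ X) (Pi.basisFun ℂ X) (ρ g)).diag x =
      if g • x = x then 1 else 0 := by
    intro x
    simp only [Matrix.diag, LinearMap.toMatrix_apply, Pi.basisFun_repr, Pi.basisFun_apply]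
    change (Pi.single x (1 : ℂ) : X → ℂ) (g⁻¹ • x) = _
    rw [Pi.single_apply, inv_smul_eq_iff]
    simp [eq_comm]
  simp only [this]
  simp [perm, MulAction.fixedBy, Fintype.card_subtype]

lemma regular (g : G) [DecidableEq G] : ∑ χ ∈ irr G, χ 1 * χ g = if g = 1 then (Nat.card G : ℂ) else 0 := by
  have hp : perm G G = fun g => if g = 1 then (Nat.card G : ℂ) else 0 := by
    ext g
    simp only [perm, MulAction.fixedBy, smul_eq_mul, mul_eq_right]
    split_ifs with h
    · subst h; simp
    · simp [h]
  have h := chars_expand (perm_mem_chars (G := G) G)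
  have hip : ∀ ψ : G → ℂ, ip (perm G G) ψ = ψ 1 := by
    intro ψ
    rw [ip, hp]
    simp
  simp only [hip] at h
  have h2 := congrFun h g
  simp only [hp, Finset.sum_apply, Pi.smul_apply, smul_eq_mul] at h2
  exact h2.symm
end basic
lemma comb {ι κ : Type*} (I : Finset ι) (J : Finset κ) (a : ι → κ → ℕ) (D : ι → ℝ) (E : κ → ℝ)
    (p : ℝ) (hp : 0 ≤ p) (hD : ∀ i ∈ I, 0 ≤ D i) (hE : ∀ j ∈ J, 0 ≤ E j)
    (h1 : ∀ i ∈ I, p * ∑ j ∈ J, a i j * (∑ i' ∈ I, D i' * a i' j) ≤ ∑ j ∈ J, a i j * E j)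
    (h2 : ∀ i ∈ I, 0 < ∑ j ∈ J, a i j * E j) :
    p * ∑ i ∈ I, D i ≤ ∑ j ∈ J, E j := by
  classical
  set d : κ → ℝ := fun j => ∑ i' ∈ I, D i' * a i' j with hd
  set S := J.filter (fun j => p * d j ≤ E j) with hS
  have hex : ∀ i ∈ I, ∃ j ∈ S, 1 ≤ a i j := by
    intro i hi
    by_contra hcon
    push Not at hcon
    have hle : ∀ j ∈ J, (a i j : ℝ) * E j ≤ a i j * (p * d j) := by
      intro j hj
      by_cases hjS : j ∈ S
      · have : a i j = 0 := by have := hcon j hjS; omega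
        simp [this]
      · have : E j < p * d j := by
          by_contra h; exact hjS (Finset.mem_filter.2 ⟨hj, not_lt.1 h⟩)
        exact mul_le_mul_of_nonneg_left this.le (Nat.cast_nonneg _)
    have hpos : ∃ j ∈ J, 0 < (a i j : ℝ) * E j := by
      by_contra h
      push Not at h
      exact absurd (Finset.sum_nonpos h) (not_le.2 (h2 i hi))
    obtain ⟨j, hj, hjp⟩ := hpos
    have haj : a i j ≠ 0 := by rintro h; simp [h] at hjp
    have hjS : j ∉ S := fun h => by have := hcon j h; omega
    have hlt : E j < p * d j := by
      by_contra h; exact hjS (Finset.mem_filter.2 ⟨hj, not_lt.1 h⟩)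
    have : ∑ j ∈ J, (a i j : ℝ) * E j < ∑ j ∈ J, a i j * (p * d j) :=
      Finset.sum_lt_sum hle ⟨j, hj, mul_lt_mul_of_pos_left hlt (by positivity)⟩
    have h1' := h1 i hi
    rw [Finset.mul_sum] at h1'
    have e : ∑ j ∈ J, p * (a i j * d j) = ∑ j ∈ J, a i j * (p * d j) :=
      Finset.sum_congr rfl fun j _ => by ring
    simp only [hd] at e this h1'
    linarith
  calc p * ∑ i ∈ I, D i ≤ p * ∑ i ∈ I, ∑ j ∈ S, D i * a i j := by
        gcongr with i hi
        obtain ⟨j, hj, hj1⟩ := hex i hi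
        have h3 : D i * (1 : ℝ) ≤ D i * a i j :=
          mul_le_mul_of_nonneg_left (by exact_mod_cast hj1) (hD i hi)
        have h4 : D i * a i j ≤ ∑ j ∈ S, D i * a i j :=
          Finset.single_le_sum (f := fun j => D i * (a i j : ℝ))
            (fun j _ => mul_nonneg (hD i hi) (Nat.cast_nonneg _)) hj
        linarith
    _ = ∑ j ∈ S, p * d j := by
        rw [Finset.sum_comm, Finset.mul_sum]
    _ ≤ ∑ j ∈ S, E j := Finset.sum_le_sum fun j hj => (Finset.mem_filter.1 hj).2
    _ ≤ ∑ j ∈ J, E j := Finset.sum_le_sum_of_subset_of_nonneg (Finset.filter_subset _ _)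
        fun j hj _ => hE j hj

section main
variable {G Q : Type} [Group G] [Fintype G] [Group Q] [Fintype Q]

lemma sum_coset (f : G →* Q) (F : Q → ℂ) (m : G → ℂ) (c : ℂ)
    (hA : ∀ g, ∑ᶠ n : f.ker, m (g * n) = Nat.card f.ker * c) :
    ∑ g : G, F (f g) * m g = (∑ g : G, F (f g)) * c := by
  classical
  have hk : (Nat.card f.ker : ℂ) ≠ 0 := by exact_mod_cast Nat.card_pos.ne'
  have h1 : ∀ n : f.ker, ∑ g : G, F (f g) * m (g * n) = ∑ g : G, F (f g) * m g := by
    intro n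
    rw [← Equiv.sum_comp (Equiv.mulRight (n : G)) (fun g => F (f g) * m g)]
    refine Finset.sum_congr rfl fun g _ => ?_
    have : f n = 1 := n.2
    simp [this]
  apply mul_left_cancel₀ hk
  calc (Nat.card f.ker : ℂ) * ∑ g : G, F (f g) * m g
      = ∑ n : f.ker, ∑ g : G, F (f g) * m (g * n) := by
        simp [h1]
    _ = ∑ g : G, F (f g) * (Nat.card f.ker * c) := by
        rw [Finset.sum_comm]
        refine Finset.sum_congr rfl fun g _ => ?_
        rw [← hA g, finsum_eq_sum_of_fintype, Finset.mul_sum]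
    _ = _ := by rw [← Finset.sum_mul]; ring

lemma card_fiber (f : G →* Q) (hf : Function.Surjective f) :
    (Nat.card G : ℂ) = Nat.card f.ker * Nat.card Q := by
  have h := Subgroup.card_mul_index f.ker
  rw [Subgroup.index_ker, MonoidHom.range_eq_top.2 hf, Subgroup.card_top] at h
  exact_mod_cast h.symm

lemma sum_comp (f : G →* Q) (hf : Function.Surjective f) (F : Q → ℂ) :
    ∑ g : G, F (f g) = Nat.card f.ker * ∑ q : Q, F q := by
  classical
  have h : ∀ q : Q, ((Finset.univ.filter (fun g => f g = q)).card : ℂ) = Nat.card f.ker := by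
    intro q
    obtain ⟨g₀, rfl⟩ := hf q
    rw [Nat.card_eq_fintype_card, Fintype.card_subtype]
    congr 1
    refine Finset.card_bij (fun g _ => g₀⁻¹ * g) ?_ ?_ ?_
    · intro g hg
      simp only [Finset.mem_filter, Finset.mem_univ, true_and] at hg ⊢
      simp [MonoidHom.mem_ker, hg]
    · intro a _ b _ h; simpa using h
    · intro b hb
      simp only [Finset.mem_filter, Finset.mem_univ, true_and, MonoidHom.mem_ker] at hb
      exact ⟨g₀ * b, by simp [hb], by simp⟩
  rw [← Finset.sum_fiberwise (s := Finset.univ) (g := f), Finset.mul_sum]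
  refine Finset.sum_congr rfl fun q _ => ?_
  rw [← h q, Finset.sum_congr rfl (g := fun _ => F q)]
  · simp
  · intro g hg; rw [(Finset.mem_filter.1 hg).2]

lemma ip_infl (f : G →* Q) (hf : Function.Surjective f) (a b : Q → ℂ) :
    ip (a ∘ f) (b ∘ f) = ip a b := by
  unfold ip
  have := sum_comp f hf (fun q => a q * b q⁻¹)
  have hk : (Nat.card f.ker : ℂ) ≠ 0 := by exact_mod_cast Nat.card_pos.ne'
  simp only [Function.comp, map_inv, this, card_fiber f hf]
  rw [mul_inv, mul_mul_mul_comm, inv_mul_cancel₀ hk, one_mul]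

lemma irr_infl (f : G →* Q) (hf : Function.Surjective f) {χ : Q → ℂ} (h : IsIrrChar Q χ) :
    IsIrrChar G (χ ∘ f) := by
  have h1 := ip_infl f hf χ χ
  rw [ip_irr_self h] at h1
  obtain ⟨V, hV, rfl⟩ := h
  let ρ : Representation ℂ G V := V.ρ.comp f
  have hc : V.character ∘ f = (FDRep.of ρ).character := rfl
  refine ⟨FDRep.of ρ, ?_, hc⟩
  rw [FDRep.simple_iff_char_is_norm_one]
  rw [hc, ip, inv_mul_eq_iff_eq_mul₀ (NeZero.ne _), mul_one] at h1
  exact h1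

theorem main_char (f : G →* Q) (hf : Function.Surjective f) (m : G → ℕ) (p : ℝ) (hp : 0 ≤ p)
    (hm : (fun g => (m g : ℂ)) ∈ chars G) (hinv : ∀ g, m g⁻¹ = m g)
    (hA : ∀ g, ∑ᶠ n : f.ker, m (g * n) = Nat.card f.ker) (h1 : 1 < m 1)
    (hB : p * ∑ᶠ n : f.ker, ((m n : ℝ) - 1) ^ 2 ≤ Nat.card f.ker * ((m 1 : ℝ) - 1)) :
    (1 + p) * charDegreeSum Q ≤ charDegreeSum G := by
  classical
  have hfin : Fintype f.ker := Fintype.ofFinite _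
  have hk : (Nat.card f.ker : ℂ) ≠ 0 := by exact_mod_cast Nat.card_pos.ne'
  have hkR : (0 : ℝ) < Nat.card f.ker := by exact_mod_cast Nat.card_pos
  set π : G → ℂ := fun g => (m g : ℂ) with hπ
  have hinj : Function.Injective (fun χ : Q → ℂ => χ ∘ f) := hf.injective_comp_right
  set I : Finset (G → ℂ) := (irr Q).image (fun χ => χ ∘ f) with hI
  have hIsub : I ⊆ irr G := by
    intro ψ hψ
    obtain ⟨χ, hχ, rfl⟩ := Finset.mem_image.1 hψ
    exact mem_irr.2 (irr_infl f hf (mem_irr.1 hχ))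
  set J := irr G \ I with hJ
  have hchar : ∀ χ ∈ irr Q, (χ ∘ f) * π ∈ chars G := fun χ hχ =>
    chars_mul (irr_mem_chars (irr_infl f hf (mem_irr.1 hχ))) hm
  have hA' : ∀ g, ∑ᶠ n : f.ker, π (g * n) = Nat.card f.ker * 1 := by
    intro g
    have := hA g
    rw [finsum_eq_sum_of_fintype] at this ⊢
    rw [mul_one, ← this]
    push_cast; rfl
  -- inner products with inflated characters
  have hipI : ∀ χ ∈ irr Q, ∀ χ' ∈ irr Q, ip ((χ ∘ f) * π) (χ' ∘ f) = ip (χ ∘ f) (χ' ∘ f) := by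
    intro χ _ χ' _
    have := sum_coset f (fun q => χ q * χ' q⁻¹) π 1 hA'
    simp only [mul_one] at this
    unfold ip
    congr 1
    simp only [Function.comp, map_inv, Pi.mul_apply]
    rw [← this]
    exact Finset.sum_congr rfl fun g _ => by ring
  have hex : ∀ χ : Q → ℂ, ∀ ψ : G → ℂ, ∃ n : ℕ, χ ∈ irr Q → ψ ∈ irr G → ip ((χ ∘ f) * π) ψ = n := by
    intro χ ψ
    by_cases h : χ ∈ irr Q ∧ ψ ∈ irr G
    · obtain ⟨n, hn⟩ := chars_ip_nat (hchar χ h.1) (mem_irr.1 h.2)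
      exact ⟨n, fun _ _ => hn⟩
    · exact ⟨0, fun a b => absurd ⟨a, b⟩ h⟩
  choose a ha using hex
  have haJ : ∀ χ ∈ irr Q, ∀ ψ ∈ J, ip ((χ ∘ f) * π) ψ = a χ ψ := fun χ hχ ψ hψ =>
    ha χ ψ hχ (Finset.mem_sdiff.1 hψ).1
  have E1 : ∀ χ ∈ irr Q, (χ ∘ f) * π - χ ∘ f = ∑ ψ ∈ J, (a χ ψ : ℂ) • ψ := by
    intro χ hχ
    have h := chars_expand (hchar χ hχ)
    rw [← Finset.sum_sdiff hIsub] at h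
    have hI' : ∑ ψ ∈ I, ip ((χ ∘ f) * π) ψ • ψ = χ ∘ f := by
      rw [hI, Finset.sum_image (fun x _ y _ h => hinj h), Finset.sum_eq_single_of_mem χ hχ]
      · rw [hipI χ hχ χ hχ, ip_infl f hf, ip_irr_self (mem_irr.1 hχ), one_smul]
      · intro χ' hχ' hne
        rw [hipI χ hχ χ' hχ', ip_infl f hf, ip_irr_ne (mem_irr.1 hχ) (mem_irr.1 hχ') hne.symm,
          zero_smul]
    rw [hI'] at h
    have h' : ∑ ψ ∈ J, (a χ ψ : ℂ) • ψ = ∑ ψ ∈ J, ip ((χ ∘ f) * π) ψ • ψ :=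
      Finset.sum_congr rfl fun ψ hψ => by rw [haJ χ hχ ψ hψ]
    rw [sub_eq_iff_eq_add, h']
    exact h
  have hdeg : ∀ {H : Type} [Group H] [Fintype H] {χ : H → ℂ}, χ ∈ irr H →
      0 < (χ 1).re ∧ ((χ 1).re : ℂ) = χ 1 := by
    intro H _ _ χ hχ
    obtain ⟨n, hn, h⟩ := irr_deg (mem_irr.1 hχ)
    rw [h]
    exact ⟨by simpa using hn, by simp⟩
  have hJirr : ∀ ψ ∈ J, ψ ∈ irr G := fun ψ hψ => (Finset.mem_sdiff.1 hψ).1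
  -- degrees
  have E1' : ∀ χ ∈ irr Q, ∑ ψ ∈ J, (a χ ψ : ℝ) * (ψ 1).re = (χ 1).re * ((m 1 : ℝ) - 1) := by
    intro χ hχ
    have h := congrFun (E1 χ hχ) 1
    simp only [Pi.sub_apply, Pi.mul_apply, Function.comp, map_one, Finset.sum_apply,
      Pi.smul_apply, smul_eq_mul, hπ] at h
    rw [← (hdeg hχ).2, Finset.sum_congr rfl fun ψ hψ => by rw [← (hdeg (hJirr ψ hψ)).2]] at h
    have h' : (χ 1).re * (m 1 : ℝ) - (χ 1).re = ∑ ψ ∈ J, (a χ ψ : ℝ) * (ψ 1).re := by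
      exact_mod_cast h
    rw [← h']; ring
  have E2 : ∀ χ ∈ irr Q, ∀ χ' ∈ irr Q,
      ip ((χ ∘ f) * π - χ ∘ f) ((χ' ∘ f) * π - χ' ∘ f) = ∑ ψ ∈ J, (a χ ψ : ℂ) * a χ' ψ := by
    intro χ hχ χ' hχ'
    rw [E1 χ hχ, ip_sum_left]
    refine Finset.sum_congr rfl fun ψ hψ => ?_
    rw [ip_smul_left, ip_comm, E1 χ' hχ', ip_sum_left, Finset.sum_eq_single_of_mem ψ hψ]
    · rw [ip_smul_left, ip_irr_self (mem_irr.1 (hJirr ψ hψ)), mul_one]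
    · intro φ hφ hne
      rw [ip_smul_left, ip_irr_ne (mem_irr.1 (hJirr φ hφ)) (mem_irr.1 (hJirr ψ hψ)) hne, mul_zero]
  have E3 : ∀ χ ∈ irr Q, Nat.card f.ker * ∑ χ' ∈ irr Q, χ' 1 *
      ip ((χ ∘ f) * π - χ ∘ f) ((χ' ∘ f) * π - χ' ∘ f) = χ 1 * ∑ n : f.ker, (π n - 1) ^ 2 := by
    intro χ hχ
    have hinv' : ∀ g, π g⁻¹ = π g := fun g => by simp [hπ, hinv]
    have step : ∑ χ' ∈ irr Q, χ' 1 * ip ((χ ∘ f) * π - χ ∘ f) ((χ' ∘ f) * π - χ' ∘ f)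
        = (Nat.card G : ℂ)⁻¹ * ∑ g : G, χ (f g) * (π g - 1) ^ 2 *
          (if f g = 1 then (Nat.card Q : ℂ) else 0) := by
      have hreg : ∀ g : G, (if f g = 1 then (Nat.card Q : ℂ) else 0)
          = ∑ χ' ∈ irr Q, χ' 1 * χ' (f g⁻¹) := by
        intro g; rw [regular]; simp
      simp only [hreg, ip, Finset.mul_sum]
      rw [Finset.sum_comm]
      refine Finset.sum_congr rfl fun g _ => Finset.sum_congr rfl fun χ' _ => ?_
      simp only [Pi.sub_apply, Pi.mul_apply, Function.comp, hinv']
      ring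
    rw [step, card_fiber f hf]
    have hQ : (Nat.card Q : ℂ) ≠ 0 := by exact_mod_cast Nat.card_pos.ne'
    have : ∑ g : G, χ (f g) * (π g - 1) ^ 2 * (if f g = 1 then (Nat.card Q : ℂ) else 0) =
        ∑ n : f.ker, χ 1 * (π n - 1) ^ 2 * Nat.card Q := by
      simp only [mul_ite, mul_zero]
      rw [← Finset.sum_filter]
      refine Finset.sum_bij' (fun g hg => ⟨g, (Finset.mem_filter.1 hg).2⟩) (fun n _ => n.1)
        (by simp) ?_ (by simp) (by simp) ?_
      · intro n _
        exact Finset.mem_filter.2 ⟨Finset.mem_univ _, n.2⟩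
      · intro g hg; simp [(Finset.mem_filter.1 hg).2]
    rw [this, ← Finset.sum_mul, ← Finset.mul_sum]
    field_simp
  have E4 : ∀ χ ∈ irr Q, ∑ j ∈ J, (a χ j : ℝ) * (∑ i' ∈ irr Q, (i' 1).re * a i' j) =
      (χ 1).re * ((∑ n : f.ker, ((m n : ℝ) - 1) ^ 2) / Nat.card f.ker) := by
    intro χ hχ
    have h := E3 χ hχ
    rw [Finset.sum_congr rfl fun χ' hχ' => by rw [E2 χ hχ χ' hχ', ← (hdeg hχ').2], ← (hdeg hχ).2] at h
    have h' : (Nat.card f.ker : ℝ) * ∑ χ' ∈ irr Q, (χ' 1).re * ∑ ψ ∈ J, (a χ ψ : ℝ) * a χ' ψ =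
      (χ 1).re * ∑ n : f.ker, ((m n : ℝ) - 1) ^ 2 := by
      apply Complex.ofReal_injective
      push_cast
      exact h
    rw [← mul_div_assoc, ← h', mul_div_cancel_left₀ _ hkR.ne']
    simp only [Finset.mul_sum]
    rw [Finset.sum_comm]
    exact Finset.sum_congr rfl fun _ _ => Finset.sum_congr rfl fun _ _ => by ring
  rw [finsum_eq_sum_of_fintype] at hB
  have hfinal := comb (irr Q) J a (fun χ => (χ 1).re) (fun ψ => (ψ 1).re) p hp
    (fun χ hχ => (hdeg hχ).1.le) (fun ψ hψ => (hdeg (hJirr ψ hψ)).1.le) ?_ ?_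
  · rw [charDegreeSum_eq, charDegreeSum_eq, ← Finset.sum_sdiff hIsub, hI,
      Finset.sum_image (fun x _ y _ h => hinj h)]
    simp only [Function.comp, map_one]
    linarith
  · intro χ hχ
    rw [E4 χ hχ, E1' χ hχ, mul_left_comm]
    refine mul_le_mul_of_nonneg_left ?_ (hdeg hχ).1.le
    rw [← mul_div_assoc, div_le_iff₀ hkR]
    linarith
  · intro χ hχ
    rw [E1' χ hχ]
    have : (1 : ℝ) < m 1 := by exact_mod_cast h1
    exact mul_pos (hdeg hχ).1 (by linarith)
end main
section action
open MulAction

lemma orbit_count {H X : Type} [Group H] [Finite X] [MulAction H X] (p : ℕ)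
    [Fact p.Prime] (P : Subgroup H) (hP : IsPGroup p P) (y : X)
    (huniq : ∀ x : X, (∀ g ∈ P, g • x = x) → x = y) :
    1 + p * (Nat.card (orbitRel.Quotient H X) - 1) ≤ Nat.card X := by
  classical
  have := Fintype.ofFinite X
  have : Fintype (orbitRel.Quotient H X) := Fintype.ofFinite _
  have e := selfEquivSigmaOrbits' H X
  have hc : Nat.card X = ∑ ω : orbitRel.Quotient H X, Nat.card ω.orbit := by
    rw [Nat.card_congr e, Nat.card_sigma]
  rw [hc]
  set ω₀ : orbitRel.Quotient H X := Quotient.mk _ y with hω₀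
  have hle : ∀ ω : orbitRel.Quotient H X, (if ω = ω₀ then 1 else p) ≤ Nat.card ω.orbit := by
    intro ω
    induction ω using Quotient.inductionOn with
    | h x =>
    have horb : (orbitRel.Quotient.orbit (Quotient.mk _ x : orbitRel.Quotient H X)) = orbit H x :=
      orbitRel.Quotient.orbit_mk x
    rw [horb]
    have hne : Nonempty (orbit H x) := ⟨⟨x, mem_orbit_self x⟩⟩
    split_ifs with h
    · exact Nat.card_pos
    · have hxy : x ≠ y := fun hh => h (by rw [hω₀, hh])
      obtain ⟨n, hn⟩ := hP.card_orbit x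
      have hsub : Nat.card (orbit P x) ≤ Nat.card (orbit H x) := by
        apply Nat.card_mono (Set.toFinite _)
        rintro _ ⟨g, rfl⟩
        exact ⟨g.1, rfl⟩
      have hn0 : n ≠ 0 := by
        rintro rfl
        rw [pow_zero, Nat.card_eq_one_iff_unique] at hn
        apply hxy
        apply huniq
        intro g hg
        have := hn.1.elim ⟨_, mem_orbit x (⟨g, hg⟩ : P)⟩ ⟨x, mem_orbit_self x⟩
        exact congrArg Subtype.val this
      calc p = p ^ 1 := (pow_one p).symm
        _ ≤ p ^ n := Nat.pow_le_pow_right (Fact.out : p.Prime).pos (by omega)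
        _ = _ := hn.symm
        _ ≤ _ := hsub
  refine le_trans (le_of_eq ?_) (Finset.sum_le_sum fun ω _ => hle ω)
  rw [Finset.sum_ite]
  simp [Finset.filter_ne', Finset.filter_eq', Finset.card_erase_of_mem, mul_comm]

lemma sum_fixed {H X : Type} [Group H] [Fintype H] [Finite X] [MulAction H X] :
    ∑ h : H, Nat.card (fixedBy X h) = Nat.card (orbitRel.Quotient H X) * Nat.card H := by
  classical
  have := Fintype.ofFinite X
  have : Fintype (orbitRel.Quotient H X) := Fintype.ofFinite _
  have h := sum_card_fixedBy_eq_card_orbits_mul_card_group H X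
  simpa [Nat.card_eq_fintype_card] using h

/-- number of fixed points -/
noncomputable def fp {G : Type} (X : Type) [Group G] [MulAction G X] (g : G) : ℕ :=
  Nat.card (fixedBy X g)

lemma fp_eq_sum {G X : Type} [Group G] [Fintype X] [MulAction G X] [DecidableEq X] (g : G) :
    fp X g = ∑ x : X, if g • x = x then 1 else 0 := by
  rw [fp, Nat.card_eq_fintype_card]
  simp only [Finset.sum_boole, Nat.cast_id]
  exact Fintype.card_subtype _

lemma action_sum {G X : Type} [Group G] [Fintype G] [Fintype X] [MulAction G X]
    (N : Subgroup G) [Fintype N] (htrans : ∀ x y : X, ∃ n ∈ N, n • x = y) (g : G) :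
    ∑ n : N, fp X (g * n) = ∑ x : X, Nat.card (stabilizer N x) := by
  classical
  simp only [fp_eq_sum]
  rw [Finset.sum_comm]
  refine Finset.sum_congr rfl fun x _ => ?_
  obtain ⟨n₀, hn₀, h⟩ := htrans x (g⁻¹ • x)
  rw [← Finset.card_filter, Nat.card_eq_fintype_card, Fintype.card_subtype]
  refine Finset.card_bij' (fun n _ => (⟨n₀, hn₀⟩ : N)⁻¹ * n) (fun n _ => (⟨n₀, hn₀⟩ : N) * n)
    ?_ ?_ (by simp) (by simp)
  · intro n hn
    simp only [Finset.mem_filter, Finset.mem_univ, true_and, mul_smul] at hn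
    simp only [Finset.mem_filter, Finset.mem_univ, true_and, mem_stabilizer_iff, mul_smul]
    rw [inv_smul_eq_iff]
    change (n : G) • x = n₀ • x
    rw [h, eq_inv_smul_iff, hn]
  · intro n hn
    simp only [Finset.mem_filter, Finset.mem_univ, true_and, mem_stabilizer_iff] at hn
    have hn' : (n : G) • x = x := hn
    simp only [Finset.mem_filter, Finset.mem_univ, true_and, Subgroup.coe_mul, mul_smul]
    rw [hn', h, smul_inv_smul]

lemma action_A {G X : Type} [Group G] [Fintype G] [Fintype X] [Nonempty X] [MulAction G X]
    (N : Subgroup G) [Fintype N] (htrans : ∀ x y : X, ∃ n ∈ N, n • x = y) :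
    ∑ x : X, Nat.card (stabilizer N x) = Nat.card N := by
  have h1 := action_sum N htrans 1
  have h2 := sum_fixed (H := N) (X := X)
  have : IsPretransitive N X := ⟨fun x y => by
    obtain ⟨n, hn, h⟩ := htrans x y
    exact ⟨⟨n, hn⟩, h⟩⟩
  have hone : Nat.card (orbitRel.Quotient N X) = 1 := by
    rw [Nat.card_eq_one_iff_unique]
    exact ⟨(pretransitive_iff_subsingleton_quotient N X).1 this, ⟨Quotient.mk _ (Classical.arbitrary X)⟩⟩
  rw [hone, one_mul] at h2
  rw [← h1, ← h2]
  refine Finset.sum_congr rfl fun n _ => ?_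
  rw [one_mul]; rfl

theorem action_main {G Q X : Type} [Group G] [Fintype G] [Group Q] [Fintype Q] [Finite X]
    [MulAction G X] (f : G →* Q) (hf : Function.Surjective f) (p : ℕ) [Fact p.Prime]
    (hX : 1 < Nat.card X)
    (N : Subgroup G) (hN : f.ker = N)
    (htrans : ∀ x y : X, ∃ n ∈ N, n • x = y)
    (hP : ∀ y : X, ∃ P : Subgroup N, IsPGroup p P ∧ (∀ g ∈ P, g • y = y) ∧
      ∀ x : X, (∀ g ∈ P, g • x = x) → x = y) :
    (1 + (p : ℝ)) * charDegreeSum Q ≤ charDegreeSum G := by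
  classical
  subst hN
  have := Fintype.ofFinite X
  have hne : Nonempty X := Nat.card_pos_iff.1 (by omega) |>.1
  have : Fintype f.ker := Fintype.ofFinite _
  have hA := action_A f.ker htrans
  have hsum := action_sum f.ker htrans
  have h1 : fp X (1 : G) = Nat.card X := by
    rw [fp, fixedBy_one_eq_univ, Nat.card_univ]
  refine main_char f hf (fp X) p (Nat.cast_nonneg _) (perm_mem_chars X) ?_ ?_ (by rwa [h1]) ?_
  · intro g
    rw [fp, fixedBy_inv, fp]
  · intro g
    rw [finsum_eq_sum_of_fintype, hsum, hA]
  · rw [finsum_eq_sum_of_fintype, h1]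
    have hs1 : ∑ n : f.ker, (fp X (n : G) : ℝ) = Nat.card f.ker := by
      have := hsum 1
      simp only [one_mul] at this
      rw [hA] at this
      exact_mod_cast this
    have hs2 : ∑ n : f.ker, (fp X (n : G)) ^ 2 = ∑ y : X, Nat.card (stabilizer f.ker y) *
        Nat.card (orbitRel.Quotient (stabilizer f.ker y) X) := by
      have : ∀ n : f.ker, (fp X (n : G)) ^ 2 = ∑ y : X, if n • y = y then fp X (n : G) else 0 := by
        intro n
        rw [sq]
        conv_lhs => rw [fp_eq_sum (n : G), Finset.sum_mul]
        refine Finset.sum_congr rfl fun y _ => ?_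
        change _ = if (n : G) • y = y then _ else _
        rw [ite_mul, one_mul, zero_mul]
        rw [← fp_eq_sum]
      simp only [this]
      rw [Finset.sum_comm]
      refine Finset.sum_congr rfl fun y _ => ?_
      rw [mul_comm, ← sum_fixed, ← Finset.sum_filter]
      refine Finset.sum_bij' (fun g hg => ⟨g, (Finset.mem_filter.1 hg).2⟩) (fun n _ => n.1)
        (by simp) ?_ (by simp) (by simp) ?_
      · intro n _
        exact Finset.mem_filter.2 ⟨Finset.mem_univ _, n.2⟩
      · intro g hg; rfl
    have hr : ∀ y : X, 1 + p * (Nat.card (orbitRel.Quotient (stabilizer f.ker y) X) - 1)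
        ≤ Nat.card X := by
      intro y
      obtain ⟨P, hPp, hfix, huniq⟩ := hP y
      have hle : P ≤ stabilizer f.ker y := fun g hg => hfix g hg
      refine orbit_count p (P.subgroupOf (stabilizer f.ker y)) ?_ y ?_
      · exact hPp.of_equiv (Subgroup.subgroupOfEquivOfLe hle).symm
      · intro x hx
        exact huniq x fun g hg => hx ⟨g, hle hg⟩ hg
    have hr' : ∀ y : X, (p : ℝ) * ((Nat.card (orbitRel.Quotient (stabilizer f.ker y) X) : ℝ) - 1)
        ≤ (Nat.card X : ℝ) - 1 := by
      intro y
      have hpos : 1 ≤ Nat.card (orbitRel.Quotient (stabilizer f.ker y) X) := by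
        have : Nonempty (orbitRel.Quotient (stabilizer f.ker y) X) := ⟨Quotient.mk _ y⟩
        exact Nat.card_pos
      have h := hr y
      have h' : (1 : ℝ) + p * ((Nat.card (orbitRel.Quotient (stabilizer f.ker y) X) - 1 : ℕ) : ℝ)
        ≤ Nat.card X := by exact_mod_cast h
      rw [Nat.cast_sub hpos] at h'
      push_cast at h'
      linarith
    have hs2' : ∑ n : f.ker, (fp X (n : G) : ℝ) ^ 2 = ∑ y : X, (Nat.card (stabilizer f.ker y) : ℝ) *
        Nat.card (orbitRel.Quotient (stabilizer f.ker y) X) := by exact_mod_cast hs2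
    have hA' : ∑ x : X, (Nat.card (stabilizer f.ker x) : ℝ) = Nat.card f.ker := by exact_mod_cast hA
    have hexp : ∑ n : f.ker, ((fp X (n : G) : ℝ) - 1) ^ 2 =
        ∑ y : X, (Nat.card (stabilizer f.ker y) : ℝ) *
        ((Nat.card (orbitRel.Quotient (stabilizer f.ker y) X) : ℝ) - 1) := by
      simp only [mul_sub, mul_one, Finset.sum_sub_distrib, hA', ← hs2', sub_sq, one_pow,
        Finset.sum_add_distrib, ← Finset.sum_mul, ← Finset.mul_sum, hs1]
      simp
      ring
    rw [hexp, ← hA', Finset.mul_sum, Finset.sum_mul]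
    refine Finset.sum_le_sum fun y _ => ?_
    rw [mul_left_comm]
    exact mul_le_mul_of_nonneg_left (hr' y) (Nat.cast_nonneg _)

theorem sylow_main (G : Type) [Group G] [Finite G] (N : Subgroup G) [N.Normal] (p : ℕ)
    [Fact p.Prime] (hX : 1 < Nat.card (Sylow p N)) :
    (1 + (p : ℝ)) * charDegreeSum (G ⧸ N) ≤ charDegreeSum G := by
  have := Fintype.ofFinite G
  have := Fintype.ofFinite (G ⧸ N)
  have hact : ∀ (n : N) (x : Sylow p N), (MulAut.conjNormal (n : G) : MulAut N) • x = n • x := by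
    intro n x
    rw [Sylow.smul_def]
    congr 1
    ext; simp
  have htr : ∀ x y : Sylow p N, ∃ n : N, (MulAut.conjNormal (n : G) : MulAut N) • x = y := by
    intro x y
    obtain ⟨n, hn⟩ := MulAction.exists_smul_eq N x y
    exact ⟨n, by rw [hact]; exact hn⟩
  have hfix : ∀ y x : Sylow p N,
      (∀ g ∈ (y : Subgroup N), (MulAut.conjNormal (g : G) : MulAut N) • x = x) ↔ x = y := by
    intro y x
    have h1 := (y : Subgroup N).sylow_mem_fixedPoints_iff (P := x)
    have h2 := y.2.sylow_mem_fixedPoints_iff (Q := x)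
    have h3 : (∀ g ∈ (y : Subgroup N), (MulAut.conjNormal (g : G) : MulAut N) • x = x) ↔
        x ∈ MulAction.fixedPoints (y : Subgroup N) (Sylow p N) := by
      rw [MulAction.mem_fixedPoints]
      constructor
      · intro h g; have := h g.1 g.2; rw [hact] at this; exact this
      · intro h g hg; rw [hact]; exact h ⟨g, hg⟩
    rw [h3, h2]
    constructor
    · intro h
      exact Sylow.ext (y.3 x.2 h)
    · rintro rfl; exact le_rfl
  let act : MulAction G (Sylow p N) := MulAction.compHom _ (MulAut.conjNormal : G →* MulAut N)
  refine action_main (X := Sylow p N) (QuotientGroup.mk' N) (QuotientGroup.mk'_surjective N) p hX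
    N (QuotientGroup.ker_mk' N) ?_ ?_
  · intro x y
    obtain ⟨n, hn⟩ := htr x y
    exact ⟨n, n.2, hn⟩
  · intro y
    exact ⟨y, y.2, (hfix y y).2 rfl, fun x hx => (hfix y x).1 hx⟩
end action
section roots

lemma avg_roots_aux {K : Type} [Field K] [NumberField K] {n : ℕ} [IsCyclotomicExtension {n} ℚ K]
    (hn : 0 < n) (s : Multiset ℂ) (hs : ∀ x ∈ s, x ^ n = 1) (α : ℂ)
    (hα : s.sum = s.card * α) (h0 : α ≠ 0) (hinteg : IsIntegral ℤ α) (hcard : 0 < s.card) :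
    ∀ x ∈ s, x = α := by
  classical
  have : NeZero n := ⟨hn.ne'⟩
  let φ₀ : K →ₐ[ℚ] ℂ := IsAlgClosed.lift
  have hζ := IsCyclotomicExtension.zeta_spec n ℚ K
  have hζ' := hζ.map_of_injective φ₀.injective
  have hex : ∀ x : ℂ, ∃ k : K, x ^ n = 1 → φ₀ k = x ∧ k ^ n = 1 := by
    intro x
    by_cases hx : x ^ n = 1
    · obtain ⟨i, _, hi⟩ := hζ'.eq_pow_of_pow_eq_one hx
      refine ⟨IsCyclotomicExtension.zeta n ℚ K ^ i, fun _ => ⟨by rw [map_pow]; exact hi, ?_⟩⟩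
      rw [← pow_mul, mul_comm, pow_mul, hζ.pow_eq_one, one_pow]
    · exact ⟨0, fun h => absurd h hx⟩
  choose k hk using hex
  set a : K := (s.map k).sum / s.card with ha
  have hc0 : (s.card : ℂ) ≠ 0 := by exact_mod_cast hcard.ne'
  have hsum : ∀ φ : K →ₐ[ℚ] ℂ, φ a * s.card = (s.map fun x => φ (k x)).sum := by
    intro φ
    rw [ha, map_div₀, map_natCast, div_mul_cancel₀ _ hc0, map_multiset_sum, Multiset.map_map]
    rfl
  have ha0 : φ₀ a = α := by
    have h := hsum φ₀
    rw [Multiset.map_congr rfl (fun x hx => (hk x (hs x hx)).1), Multiset.map_id', hα, mul_comm] at h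
    exact mul_left_cancel₀ hc0 h
  have hne : a ≠ 0 := by rintro h; rw [h, map_zero] at ha0; exact h0 ha0.symm
  have hroot : ∀ x : ℂ, x ^ n = 1 → ‖x‖ = 1 := fun x hx =>
    Complex.norm_eq_one_of_pow_eq_one hx hn.ne'
  have hle : ∀ φ : K →ₐ[ℚ] ℂ, ‖φ a‖ ≤ 1 := by
    intro φ
    have h1 : ‖(s.map fun x => φ (k x)).sum‖ ≤ s.card := by
      refine (norm_multiset_sum_le _).trans ?_
      rw [Multiset.map_map, Multiset.map_congr rfl (g := fun _ => (1 : ℝ))]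
      · simp
      · intro x hx
        apply hroot
        rw [← map_pow, (hk x (hs x hx)).2, map_one]
    rw [← hsum φ, norm_mul, Complex.norm_natCast] at h1
    have : (0 : ℝ) < s.card := by exact_mod_cast hcard
    nlinarith
  have hintega : IsIntegral ℤ a := by
    rw [← ha0] at hinteg
    exact (isIntegral_algHom_iff (φ₀.restrictScalars ℤ) φ₀.injective).1 hinteg
  have hnorm := Algebra.norm_eq_prod_embeddings ℚ ℂ a
  obtain ⟨z, hz⟩ := IsIntegrallyClosed.isIntegral_iff.1 (Algebra.isIntegral_norm ℚ hintega)
  have hz0 : z ≠ 0 := by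
    rintro rfl
    rw [map_zero] at hz
    exact Algebra.norm_ne_zero_iff.2 hne hz.symm
  have hprod : (1 : ℝ) ≤ ∏ φ : K →ₐ[ℚ] ℂ, ‖φ a‖ := by
    rw [← norm_prod, ← hnorm, ← hz]
    simp only [eq_intCast, map_intCast, Complex.norm_intCast]
    exact_mod_cast Int.one_le_abs hz0
  have hα1 : ‖α‖ = 1 := by
    apply le_antisymm
    · rw [← ha0]; exact hle φ₀
    · rw [← ha0]
      refine hprod.trans ?_
      rw [← Finset.mul_prod_erase _ _ (Finset.mem_univ φ₀)]
      exact mul_le_of_le_one_right (norm_nonneg _)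
        (Finset.prod_le_one (fun _ _ => norm_nonneg _) (fun φ _ => hle φ))
  -- equality in the triangle inequality
  have hconj : α * (starRingEnd ℂ) α = 1 := by
    rw [Complex.mul_conj, Complex.normSq_eq_norm_sq, hα1]; simp
  have hre1 : ∀ x ∈ s, (x * (starRingEnd ℂ) α).re ≤ 1 := by
    intro x hx
    refine (Complex.re_le_norm _).trans ?_
    rw [norm_mul, hroot x (hs x hx), RCLike.norm_conj, hα1, one_mul]
  have htot : (s.map fun x => (1 - (x * (starRingEnd ℂ) α).re)).sum = 0 := by
    have h1 : (s.map fun x => (x * (starRingEnd ℂ) α)).sum = s.card := by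
      rw [Multiset.sum_map_mul_right, Multiset.map_id', hα, mul_assoc, hconj, mul_one]
    have h2 := congrArg Complex.re h1
    have h3 : ((s.map fun x => (x * (starRingEnd ℂ) α)).sum).re =
        (s.map fun x => (x * (starRingEnd ℂ) α).re).sum := by
      have := map_multiset_sum Complex.reAddGroupHom (s.map fun x => (x * (starRingEnd ℂ) α))
      rw [Multiset.map_map] at this
      exact this
    rw [Multiset.sum_map_sub, ← h3, h2]
    simp
  intro x hx
  have hz := Multiset.all_zero_of_le_zero_le_of_sum_eq_zero (s := s.map fun x => (1 - (x * (starRingEnd ℂ) α).re))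
    (by
      intro y hy
      obtain ⟨x, hx, rfl⟩ := Multiset.mem_map.1 hy
      have := hre1 x hx
      linarith) htot _ (Multiset.mem_map_of_mem _ hx)
  have hre : (x * (starRingEnd ℂ) α).re = 1 := by linarith
  have hnm : ‖x * (starRingEnd ℂ) α‖ = 1 := by
    rw [norm_mul, hroot x (hs x hx), RCLike.norm_conj, hα1, one_mul]
  have him : (x * (starRingEnd ℂ) α).im = 0 := by
    have h := Complex.sq_norm (x * (starRingEnd ℂ) α)
    rw [hnm, Complex.normSq_apply, hre] at h
    nlinarith
  have hx1 : x * (starRingEnd ℂ) α = 1 := Complex.ext (by simpa using hre) (by simpa using him)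
  calc x = x * (α * (starRingEnd ℂ) α) := by rw [hconj, mul_one]
    _ = (x * (starRingEnd ℂ) α) * α := by ring
    _ = α := by rw [hx1, one_mul]

lemma avg_roots {n : ℕ} (hn : 0 < n) (s : Multiset ℂ) (hs : ∀ x ∈ s, x ^ n = 1) (α : ℂ)
    (hα : s.sum = s.card * α) (h0 : α ≠ 0) (hinteg : IsIntegral ℤ α) (hcard : 0 < s.card) :
    ∀ x ∈ s, x = α := by
  have : NeZero n := ⟨hn.ne'⟩
  have : NeZero (n : ℚ) := ⟨by exact_mod_cast hn.ne'⟩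
  have : IsCyclotomicExtension {n} ℚ (CyclotomicField n ℚ) :=
    CyclotomicField.isCyclotomicExtension n ℚ
  have : NumberField (CyclotomicField n ℚ) := IsCyclotomicExtension.numberField {n} ℚ _
  exact avg_roots_aux (K := CyclotomicField n ℚ) hn s hs α hα h0 hinteg hcard

end roots

section schur
open Polynomial
variable {G : Type} [Group G] [Fintype G]

lemma roots_pow {V : Type} [AddCommGroup V] [Module ℂ V] [FiniteDimensional ℂ V]
    (T : Module.End ℂ V) (n : ℕ) (hT : T ^ n = 1) : ∀ x ∈ T.charpoly.roots, x ^ n = 1 := by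
  intro x hx
  have h1 : T.HasEigenvalue x := by
    rw [Module.End.hasEigenvalue_iff_isRoot_charpoly]
    exact isRoot_of_mem_roots hx
  obtain ⟨v, hv⟩ := h1.exists_hasEigenvector
  have h2 := hv.pow_apply n
  rw [hT, Module.End.one_apply] at h2
  have h3 : (x ^ n - 1) • v = 0 := by rw [sub_smul, ← h2, one_smul, sub_self]
  rcases smul_eq_zero.1 h3 with h | h
  · exact sub_eq_zero.1 h
  · exact absurd h hv.2

lemma integral_of_pow {n : ℕ} (hn : 0 < n) {x : ℂ} (hx : x ^ n = 1) : IsIntegral ℤ x := by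
  refine IsIntegral.of_pow hn ?_
  rw [hx]; exact isIntegral_one

lemma rho_pow {V : Type} [AddCommGroup V] [Module ℂ V] (ρ : Representation ℂ G V) (g : G) :
    (ρ g) ^ (Nat.card G) = 1 := by
  rw [← map_pow, pow_card_eq_one', map_one]

lemma char_integral {V : Type} [AddCommGroup V] [Module ℂ V] [FiniteDimensional ℂ V]
    (ρ : Representation ℂ G V) (g : G) : IsIntegral ℤ (ρ.character g) := by
  rw [Representation.character, Module.End.trace_eq_sum_roots_charpoly_of_splits (IsAlgClosed.splits _)]
  refine IsIntegral.multiset_sum fun x hx => ?_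
  exact integral_of_pow Nat.card_pos (roots_pow _ _ (rho_pow ρ g) x hx)

lemma scalar_of_roots {V : Type} [AddCommGroup V] [Module ℂ V] [FiniteDimensional ℂ V]
    (T : Module.End ℂ V) {n : ℕ} (hn : 0 < n) (hT : T ^ n = 1) (α : ℂ)
    (h : ∀ x ∈ T.charpoly.roots, x = α) : T = algebraMap ℂ _ α := by
  have hch : T.charpoly = (X - C α) ^ (T.charpoly.roots.card) := by
    have h1 := (IsAlgClosed.splits T.charpoly).eq_prod_roots
    rw [(LinearMap.charpoly_monic T).leadingCoeff, C_1, one_mul, Multiset.map_congr rfl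
      (g := fun _ => X - C α) (fun x hx => by rw [h x hx])] at h1
    simpa using h1
  have hnil : IsNilpotent (T - algebraMap ℂ _ α) := by
    refine ⟨T.charpoly.roots.card, ?_⟩
    have h2 := LinearMap.aeval_self_charpoly T
    rw [hch] at h2
    simpa using h2
  have hss : (T - algebraMap ℂ _ α).IsSemisimple := by
    have hsep : (X ^ n - 1 : ℂ[X]).Separable := by
      have := Polynomial.X_pow_sub_one_separable_iff (F := ℂ) (n := n)
      exact this.2 (by exact_mod_cast hn.ne')
    have hTs : T.IsSemisimple :=
      Module.End.isSemisimple_of_squarefree_aeval_eq_zero hsep.squarefree (by simp [hT])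
    have := hTs.aeval (X - C α)
    simpa using this
  exact sub_eq_zero.1 (Module.End.eq_zero_of_isNilpotent_isSemisimple hnil hss)

lemma schur {V : FDRep ℂ G} (hV : CategoryTheory.Simple V) (S : Module.End ℂ V)
    (hS : ∀ g, S ∘ₗ V.ρ g = V.ρ g ∘ₗ S) : ∃ c : ℂ, S = algebraMap ℂ _ c := by
  have h1 := (FDRep.simple_iff_char_is_norm_one V).1 hV
  have := invertibleOfNonzero (NeZero.ne (Nat.card G : ℂ))
  let ρ : Representation ℂ G V := V.ρ
  have h := Representation.card_inv_mul_sum_char_mul_char_eq_finrank ρ ρ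
  have hc : ρ.character = V.character := rfl
  rw [hc, h1, inv_mul_cancel₀ (NeZero.ne _)] at h
  have h2 : Module.finrank ℂ (Representation.IntertwiningMap ρ ρ) = 1 := by exact_mod_cast h.symm
  rw [← (Representation.invariantsEquivIntertwiningMap ρ ρ).finrank_eq] at h2
  have hmem : ∀ S : Module.End ℂ V, (∀ g, S ∘ₗ V.ρ g = V.ρ g ∘ₗ S) →
      S ∈ (Representation.linHom ρ ρ).invariants := by
    intro S hS g
    rw [Representation.linHom_apply, ← LinearMap.comp_assoc]
    have := hS g⁻¹
    change (ρ g ∘ₗ S) ∘ₗ ρ g⁻¹ = S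
    rw [LinearMap.comp_assoc]
    change ρ g ∘ₗ (S ∘ₗ V.ρ g⁻¹) = S
    rw [this, ← LinearMap.comp_assoc]
    change (ρ g * ρ g⁻¹) ∘ₗ S = S
    rw [← map_mul, mul_inv_cancel, map_one]; rfl
  have hid := hmem 1 (fun g => rfl)
  have hne : (⟨1, hid⟩ : (Representation.linHom ρ ρ).invariants) ≠ 0 := by
    intro h0
    have h01 : (1 : Module.End ℂ V) = 0 := congrArg Subtype.val h0
    obtain ⟨n, hn, hd⟩ := irr_deg ⟨V, hV, rfl⟩
    rw [FDRep.char_one] at hd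
    have hz := congrArg (LinearMap.trace ℂ V) h01
    rw [LinearMap.trace_one, map_zero, hd] at hz
    have : n = 0 := by exact_mod_cast hz
    omega
  obtain ⟨c, hc⟩ := (finrank_eq_one_iff_of_nonzero' _ hne).1 h2 ⟨S, hmem S hS⟩
  refine ⟨c, ?_⟩
  have := congrArg Subtype.val hc
  rw [Algebra.algebraMap_eq_smul_one]
  exact this.symm

lemma burnside_scalar {V : FDRep ℂ G} (hV : CategoryTheory.Simple V) (z : G)
    (hcop : Nat.Coprime (Nat.card {x : G // IsConj z x}) (Module.finrank ℂ V))
    (hz : V.character z ≠ 0) : ∃ c : ℂ, V.ρ z = algebraMap ℂ _ c := by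
  classical
  let ρ : Representation ℂ G V := V.ρ
  set C : Finset G := Finset.univ.filter (fun x => IsConj z x) with hC
  have hCcard : Nat.card {x : G // IsConj z x} = C.card := by
    rw [Nat.card_eq_fintype_card, Fintype.card_subtype]
  rw [hCcard] at hcop
  set d := Module.finrank ℂ V with hd
  have hd0 : 0 < d := by
    obtain ⟨n, hn, h⟩ := irr_deg ⟨V, hV, rfl⟩
    rw [FDRep.char_one] at h
    have : d = n := by exact_mod_cast h
    omega
  set S : Module.End ℂ V := ∑ x ∈ C, ρ x with hSdef
  have hcomm : ∀ g, S * ρ g = ρ g * S := by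
    intro g
    rw [hSdef, Finset.sum_mul, Finset.mul_sum]
    refine Finset.sum_bij' (fun x _ => g⁻¹ * x * g) (fun x _ => g * x * g⁻¹) ?_ ?_ ?_ ?_ ?_
    · intro x hx
      rw [hC, Finset.mem_filter] at hx ⊢
      refine ⟨Finset.mem_univ _, hx.2.trans (isConj_iff.2 ⟨g⁻¹, by simp⟩)⟩
    · intro x hx
      rw [hC, Finset.mem_filter] at hx ⊢
      refine ⟨Finset.mem_univ _, hx.2.trans (isConj_iff.2 ⟨g, by simp⟩)⟩
    · intro x _; simp [mul_assoc]
    · intro x _; simp [mul_assoc]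
    · intro x _; rw [← map_mul, ← map_mul]; congr 1; simp [mul_assoc]
  obtain ⟨l, hl⟩ := schur hV S hcomm
  have hnt : Nontrivial V := Module.nontrivial_of_finrank_pos hd0
  -- integrality of l
  have hlint : IsIntegral ℤ l := by
    let Φ : MonoidAlgebra ℤ G →ₐ[ℤ] Module.End ℂ V := MonoidAlgebra.lift ℤ _ G ρ
    have h1 : IsIntegral ℤ (∑ x ∈ C, MonoidAlgebra.of ℤ G x) := IsIntegral.of_finite ℤ _
    have h2 := h1.map Φ
    have h3 : Φ (∑ x ∈ C, MonoidAlgebra.of ℤ G x) = S := by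
      rw [map_sum]
      exact Finset.sum_congr rfl fun x _ => by simp [Φ]
    rw [h3, hl] at h2
    exact (isIntegral_algebraMap_iff (FaithfulSMul.algebraMap_injective ℂ (Module.End ℂ V))).1 h2
  have htr : l * d = C.card * V.character z := by
    have h1 : LinearMap.trace ℂ V S = C.card * V.character z := by
      rw [hSdef, map_sum, Finset.sum_congr rfl (g := fun _ => V.character z)]
      · simp
      · intro x hx
        obtain ⟨c, rfl⟩ := isConj_iff.1 (Finset.mem_filter.1 hx).2
        exact FDRep.char_conj V z c
    rw [← h1, hl, Algebra.algebraMap_eq_smul_one, map_smul, LinearMap.trace_one, smul_eq_mul]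
  have hdC : (d : ℂ) ≠ 0 := by exact_mod_cast hd0.ne'
  set α : ℂ := V.character z / d with hα
  have hαint : IsIntegral ℤ α := by
    have hbez := Nat.gcd_eq_gcd_ab C.card d
    rw [hcop, Nat.cast_one] at hbez
    have hb : (1 : ℂ) = C.card * (Nat.gcdA C.card d : ℂ) + d * (Nat.gcdB C.card d : ℂ) := by
      exact_mod_cast congrArg (Int.cast : ℤ → ℂ) hbez
    have hαeq : α = (Nat.gcdA C.card d : ℂ) * l + (Nat.gcdB C.card d : ℂ) * V.character z := by
      rw [hα, div_eq_iff hdC]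
      linear_combination (V.character z) * hb - (Nat.gcdA C.card d : ℂ) * htr
    rw [hαeq]
    have hi : ∀ m : ℤ, IsIntegral ℤ (m : ℂ) := fun m => isIntegral_algebraMap (R := ℤ) (A := ℂ) (x := m)
    exact ((hi _).mul hlint).add ((hi _).mul (char_integral ρ z))
  have hroots := roots_pow (ρ z) _ (rho_pow ρ z)
  have htr2 : V.character z = (ρ z).charpoly.roots.sum :=
    Module.End.trace_eq_sum_roots_charpoly_of_splits (IsAlgClosed.splits _)
  have hrc : (ρ z).charpoly.roots.card = d := by
    rw [← (IsAlgClosed.splits (ρ z).charpoly).natDegree_eq_card_roots, LinearMap.charpoly_natDegree]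
  refine ⟨α, scalar_of_roots (ρ z) (Nat.card_pos (α := G)) (rho_pow ρ z) α ?_⟩
  refine avg_roots (Nat.card_pos (α := G)) _ hroots α ?_ (div_ne_zero hz hdC) hαint (by omega)
  rw [hrc, ← htr2, hα, mul_div_cancel₀ _ hdC]

lemma one_irr : IsIrrChar G (fun _ => 1) := by
  let ρ : Representation ℂ G ℂ := 1
  have hc : (FDRep.of ρ).character = fun _ => 1 := by
    ext g
    change LinearMap.trace ℂ ℂ (ρ g) = 1
    simp [ρ]
  refine ⟨FDRep.of ρ, ?_, hc.symm⟩
  rw [FDRep.simple_iff_char_is_norm_one, hc]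
  simp

/-- A finite simple group with a conjugacy class of prime power size has that class central. -/
theorem burnside_class [IsSimpleGroup G] (z : G) (hz : z ≠ 1) (p c : ℕ) (hp : p.Prime)
    (hcard : Nat.card {x : G // IsConj z x} = p ^ c) : ∀ g : G, z * g = g * z := by
  classical
  have hex : ∃ χ ∈ irr G, χ ≠ (fun _ => 1) ∧ χ z ≠ 0 ∧ ∀ n : ℕ, χ 1 = n → ¬ p ∣ n := by
    by_contra hcon
    push Not at hcon
    have hreg := regular z
    rw [if_neg hz, ← Finset.add_sum_erase _ _ (mem_irr.2 one_irr)] at hreg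
    simp only [mul_one] at hreg
    have hex2 : ∀ χ ∈ (irr G).erase (fun _ => 1), ∃ β : ℂ, IsIntegral ℤ β ∧ χ 1 * χ z = p * β := by
      intro χ hχ
      rw [Finset.mem_erase] at hχ
      by_cases h0 : χ z = 0
      · exact ⟨0, isIntegral_zero, by simp [h0]⟩
      obtain ⟨n, hn, m, rfl⟩ := hcon χ hχ.2 hχ.1 h0
      obtain ⟨V, hV, rfl⟩ := mem_irr.1 hχ.2
      refine ⟨m * V.character z, ?_, by rw [hn]; push_cast; ring⟩
      have := char_integral (G := G) (V := V) V.ρ z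
      exact IsIntegral.mul (isIntegral_natCast m) this
    have hsum : ∃ β : ℂ, IsIntegral ℤ β ∧ ∑ χ ∈ (irr G).erase (fun _ => 1), χ 1 * χ z = p * β := by
      choose! β h1 h2 using hex2
      refine ⟨∑ χ ∈ (irr G).erase (fun _ => 1), β χ, IsIntegral.sum _ h1, ?_⟩
      rw [Finset.mul_sum]
      exact Finset.sum_congr rfl h2
    obtain ⟨β, hβ, hs⟩ := hsum
    rw [hs] at hreg
    have hp0 : (p : ℂ) ≠ 0 := by exact_mod_cast hp.ne_zero
    have hβ' : β = algebraMap ℚ ℂ (-1 / p) := by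
      simp only [map_div₀, map_neg, map_one, map_natCast]
      field_simp
      linear_combination hreg
    rw [hβ'] at hβ
    have hq := (isIntegral_algebraMap_iff (FaithfulSMul.algebraMap_injective ℚ ℂ)).1 hβ
    obtain ⟨k, hk⟩ := IsIntegrallyClosed.isIntegral_iff.1 hq
    have hpQ : (p : ℚ) ≠ 0 := by exact_mod_cast hp.ne_zero
    rw [eq_div_iff hpQ] at hk
    have hk' : k * (p : ℤ) = -1 := by
      have : (k : ℚ) * p = -1 := hk
      exact_mod_cast this
    have : (p : ℤ) ∣ 1 := ⟨-k, by linarith⟩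
    have := Int.natAbs_dvd_natAbs.2 this
    simp at this
    exact hp.one_lt.ne' this
  obtain ⟨χ, hχ, hne, hχz, hdiv⟩ := hex
  obtain ⟨V, hV, rfl⟩ := mem_irr.1 hχ
  have hnd := hdiv _ (FDRep.char_one V)
  obtain ⟨s, hs⟩ := burnside_scalar hV z (by
    rw [hcard]; exact Nat.Coprime.pow_left _ ((Nat.Prime.coprime_iff_not_dvd hp).2 hnd)) hχz
  intro g
  have hcomm : V.ρ (z * g) = V.ρ (g * z) := by
    rw [map_mul, map_mul, hs]
    exact Algebra.commutes s _
  rcases (inferInstance : (MonoidHom.ker V.ρ).Normal).eq_bot_or_eq_top with hk | hk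
  · exact (MonoidHom.ker_eq_bot_iff _).1 hk hcomm
  · exfalso
    apply hne
    have hconst : ∀ g, V.character g = V.character 1 := by
      intro g
      have : g ∈ MonoidHom.ker V.ρ := by rw [hk]; trivial
      rw [MonoidHom.mem_ker] at this
      simp only [FDRep.character, this, map_one]
    obtain ⟨n, hn, hn1⟩ := irr_deg ⟨V, hV, rfl⟩
    have h1 := ip_irr_self ⟨V, hV, rfl⟩
    unfold ip at h1
    simp only [hconst, hn1] at h1
    rw [Finset.sum_const, Finset.card_univ, ← Nat.card_eq_fintype_card, nsmul_eq_mul,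
      inv_mul_cancel_left₀ (NeZero.ne _)] at h1
    have h2 : n * n = 1 := by exact_mod_cast h1
    have h3 : n = 1 := Nat.eq_one_of_mul_eq_one_left h2
    ext g
    rw [hconst, hn1, h3, Nat.cast_one]
end schur
section solv

theorem isSolvable_of_normal {M : Type} [Group M] (H : Subgroup M) [H.Normal]
    (h1 : Group.IsSolvable H) (h2 : Group.IsSolvable (M ⧸ H)) : Group.IsSolvable M :=
  Group.isSolvable_of_ker_le_range H.subtype (QuotientGroup.mk' H) (by simp)

theorem isSolvable_of_pgroup {M : Type} [Group M] [Finite M] (p : ℕ) [Fact p.Prime]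
    (h : IsPGroup p M) : Group.IsSolvable M := by
  have := h.isNilpotent
  infer_instance

theorem class_card {M : Type} [Group M] [Finite M] (z : M) :
    Nat.card {x : M // IsConj z x} * Nat.card (Subgroup.centralizer {z}) = Nat.card M := by
  have h1 : {x : M | IsConj z x} = MulAction.orbit (ConjAct M) z := by
    ext x
    rw [ConjAct.mem_orbit_conjAct, Set.mem_setOf_eq, isConj_comm]
  have h2 : Nat.card {x : M // IsConj z x} = (MulAction.stabilizer (ConjAct M) z).index := by
    rw [MulAction.index_stabilizer, ← h1]; rfl
  rw [h2, Subgroup.nat_card_centralizer_nat_card_stabilizer, Subgroup.index_mul_card]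
  rfl

theorem burnside_pq (p q : ℕ) [hp : Fact p.Prime] [hq : Fact q.Prime] (n : ℕ) :
    ∀ (M : Type) [Group M] [Finite M], Nat.card M = n →
      (∃ a b : ℕ, Nat.card M = p ^ a * q ^ b) → Group.IsSolvable M := by
  induction n using Nat.strong_induction_on with
  | _ n ih =>
    intro M _ _ hn ⟨a, b, hab⟩
    have hdvd : ∀ k : ℕ, k ∣ Nat.card M → ∃ a b : ℕ, k = p ^ a * q ^ b := by
      intro k hk
      rw [hab] at hk
      obtain ⟨x, y, hx, hy, rfl⟩ := exists_dvd_and_dvd_of_dvd_mul hk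
      obtain ⟨i, _, rfl⟩ := (Nat.dvd_prime_pow hp.1).1 hx
      obtain ⟨j, _, rfl⟩ := (Nat.dvd_prime_pow hq.1).1 hy
      exact ⟨i, j, rfl⟩
    rcases subsingleton_or_nontrivial M with hs | hnt
    · infer_instance
    by_cases hsimple : ∃ H : Subgroup M, H.Normal ∧ H ≠ ⊥ ∧ H ≠ ⊤
    · obtain ⟨H, hH, hb, ht⟩ := hsimple
      have hmul := H.card_mul_index
      have hi1 : H.index ≠ 1 := fun h => ht (Subgroup.index_eq_one.1 h)
      have hc1 : Nat.card H ≠ 1 := fun h => hb (Subgroup.card_eq_one.1 h)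
      have hi0 : H.index ≠ 0 := Subgroup.index_ne_zero_of_finite
      have hc0 : 0 < Nat.card H := Nat.card_pos
      have hlt1 : Nat.card H < n := by
        rw [← hn, ← hmul]; exact lt_mul_of_one_lt_right hc0 (by omega)
      have hlt2 : Nat.card (M ⧸ H) < n := by
        rw [← hn, ← hmul]; exact lt_mul_of_one_lt_left (by change 0 < H.index; omega) (by omega)
      exact isSolvable_of_normal H (ih _ hlt1 H rfl (hdvd _ (Subgroup.card_subgroup_dvd_card H)))
        (ih _ hlt2 (M ⧸ H) rfl (hdvd _ (Subgroup.index_dvd_card H)))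
    · push Not at hsimple
      have : IsSimpleGroup M := ⟨fun H hH => by
        by_cases h : H = ⊥
        · exact Or.inl h
        · exact Or.inr (hsimple H hH h)⟩
      let Q : Sylow q M := default
      rcases subsingleton_or_nontrivial Q with hQ | hQ
      · -- `M` is a `p`-group
        have hq1 : Nat.card Q = 1 := Nat.card_unique
        have hnd : ¬ q ∣ Nat.card M := by
          intro h
          have := Q.dvd_card_of_dvd_card h
          rw [hq1] at this
          exact hq.1.one_lt.ne' (Nat.dvd_one.1 this)
        have hb0 : b = 0 := by
          by_contra hb0
          exact hnd (hab ▸ Dvd.dvd.mul_left (dvd_pow_self q hb0) _)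
        rw [hb0, pow_zero, mul_one] at hab
        exact isSolvable_of_pgroup p (IsPGroup.of_card hab)
      · have := Q.isPGroup'.center_nontrivial
        obtain ⟨z, hz⟩ := exists_ne (1 : Subgroup.center Q)
        have hzz : ((z : Q) : M) ≠ 1 := by
          intro h
          apply hz
          ext
          simpa using h
        have hle : (Q : Subgroup M) ≤ Subgroup.centralizer {((z : Q) : M)} := by
          intro g hg
          rw [Subgroup.mem_centralizer_singleton_iff]
          have := Subgroup.mem_center_iff.1 z.2 ⟨g, hg⟩
          have h2 := congrArg Subtype.val this
          first
            | exact h2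
            | exact h2.symm
        have hcl := class_card ((z : Q) : M)
        have hqd : ¬ q ∣ Nat.card {x : M // IsConj ((z : Q) : M) x} := by
          intro h
          have h1 : Nat.card {x : M // IsConj ((z : Q) : M) x} ∣ (Q : Subgroup M).index := by
            obtain ⟨k, hk⟩ := Subgroup.card_dvd_of_le hle
            refine ⟨k, ?_⟩
            have h3 := (Q : Subgroup M).card_mul_index
            rw [← hcl, hk] at h3
            have h0 : 0 < Nat.card (Q : Subgroup M) := Nat.card_pos
            apply Nat.eq_of_mul_eq_mul_left h0
            rw [h3]; ring
          exact Q.not_dvd_index (h.trans h1)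
        obtain ⟨i, j, hij⟩ := hdvd _ (Dvd.intro _ hcl)
        have hj : j = 0 := by
          by_contra hj
          exact hqd (hij ▸ Dvd.dvd.mul_left (dvd_pow_self q hj) _)
        rw [hj, pow_zero, mul_one] at hij
        have : Fintype M := Fintype.ofFinite M
        have hcen := burnside_class ((z : Q) : M) hzz p i hp.1 hij
        have hzc : ((z : Q) : M) ∈ Subgroup.center M :=
          Subgroup.mem_center_iff.2 fun g => (hcen g).symm
        have htop : Subgroup.center M = ⊤ := by
          rcases (inferInstance : (Subgroup.center M).Normal).eq_bot_or_eq_top with h | h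
          · rw [h] at hzc; exact absurd (Subgroup.mem_bot.1 hzc) hzz
          · exact h
        rw [← IsSimpleGroup.comm_iff_isSolvable]
        intro x y
        have hx : y ∈ Subgroup.center M := by rw [htop]; trivial
        exact Subgroup.mem_center_iff.1 hx x

theorem solvable_of_sylow (n : ℕ) :
    ∀ (M : Type) [Group M] [Finite M], Nat.card M = n →
      (∀ p : ℕ, 5 ≤ p → p.Prime → Nat.card (Sylow p M) ≤ 1) → Group.IsSolvable M := by
  induction n using Nat.strong_induction_on with
  | _ n ih =>
    intro M _ _ hn h
    by_cases hex : ∃ p : ℕ, 5 ≤ p ∧ p.Prime ∧ p ∣ Nat.card M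
    · obtain ⟨p, h5, hp, hdvd⟩ := hex
      have : Fact p.Prime := ⟨hp⟩
      have hsub : Subsingleton (Sylow p M) := by
        have := h p h5 hp
        exact (Finite.card_le_one_iff_subsingleton).1 this
      let P : Sylow p M := default
      have hPn : (P : Subgroup M).Normal := Sylow.normal_of_subsingleton P
      have hPs : Group.IsSolvable (P : Subgroup M) := isSolvable_of_pgroup p P.isPGroup'
      refine isSolvable_of_normal (P : Subgroup M) hPs (ih (Nat.card (M ⧸ (P : Subgroup M))) ?_ _ rfl ?_)
      · have hmul := (P : Subgroup M).card_mul_index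
        have h1 := P.dvd_card_of_dvd_card hdvd
        have h2 : 0 < Nat.card (P : Subgroup M) := Nat.card_pos
        have h3 := Nat.le_of_dvd h2 h1
        rw [← hn, ← hmul]
        exact lt_mul_of_one_lt_left (Nat.pos_of_ne_zero Subgroup.index_ne_zero_of_finite) (by omega)
      · intro r hr5 hr
        have : Fact r.Prime := ⟨hr⟩
        exact (Nat.card_le_card_of_surjective _ (Sylow.mapSurjective_surjective
          (QuotientGroup.mk'_surjective (P : Subgroup M)) r)).trans (h r hr5 hr)
    · push Not at hex
      have : Fact (Nat.Prime 2) := ⟨Nat.prime_two⟩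
      have : Fact (Nat.Prime 3) := ⟨Nat.prime_three⟩
      refine burnside_pq 2 3 _ M rfl ?_
      have key : ∀ k : ℕ, 0 < k → (∀ p, p.Prime → p ∣ k → p < 5) → ∃ a b : ℕ, k = 2 ^ a * 3 ^ b := by
        intro k
        induction k using Nat.strong_induction_on with
        | _ k ihk =>
          intro hk hpk
          by_cases hk1 : k = 1
          · exact ⟨0, 0, by simpa using hk1⟩
          obtain ⟨p, hp, m, rfl⟩ := Nat.exists_prime_and_dvd hk1
          have hm : 0 < m := Nat.pos_of_mul_pos_left hk
          obtain ⟨a, b, hm'⟩ := ihk m (lt_mul_of_one_lt_left hm hp.one_lt) hm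
            (fun r hr hrm => hpk r hr (hrm.mul_left _))
          have hp5 := hpk p hp (dvd_mul_right _ _)
          have hp2 := hp.two_le
          interval_cases p
          · exact ⟨a + 1, b, by rw [hm']; ring⟩
          · exact ⟨a, b + 1, by rw [hm']; ring⟩
          · exact absurd hp (by norm_num)
      refine key _ Nat.card_pos fun p hp hd => ?_
      by_contra hlt
      exact hex p (by omega) hp hd

theorem charDegreeSum_nonneg (H : Type) [Group H] [Finite H] : 0 ≤ charDegreeSum H := by
  unfold charDegreeSum
  have : Fintype H := Fintype.ofFinite H
  refine finsum_mem_induction (fun x : ℝ => 0 ≤ x) le_rfl (fun _ _ => add_nonneg) ?_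
  intro χ hχ
  obtain ⟨n, _, h⟩ := irr_deg hχ
  rw [h]
  simp

end solv
end DegSum

theorem degree_sum_ge_six_mul_quotient
    (G : Type) [Group G] [Finite G] (N : Subgroup G) [N.Normal]
    (hN_nonsolvable : ¬ IsSolvable N) :
    6 * charDegreeSum (G ⧸ N) ≤ charDegreeSum G := by
  have hex : ∃ p : ℕ, 5 ≤ p ∧ p.Prime ∧ 1 < Nat.card (Sylow p N) := by
    by_contra hcon
    push Not at hcon
    exact hN_nonsolvable (DegSum.solvable_of_sylow _ N rfl hcon)
  obtain ⟨p, h5, hp, hX⟩ := hex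
  have : Fact p.Prime := ⟨hp⟩
  have h := DegSum.sylow_main G N p hX
  have h0 := DegSum.charDegreeSum_nonneg (G ⧸ N)
  have h5' : (5 : ℝ) ≤ p := by exact_mod_cast h5
  nlinarith
end

section
/- Let G be a finite group. If T(G) ≤ 2·k(G), where T(G) is the sum of the degrees of the complex irreducible characters of G and k(G) is the number of conjugacy classes of G, then G is solvable. -/
theorem comb_lemma {J Λ : Type} [Fintype J] [Fintype Λ] [Nonempty Λ] (d : J → ℕ) (a : Λ → J → ℕ)
    (n : ℕ) (hn : 2 ≤ n) (h1 : ∀ j, ∑ l, a l j + 2 ≤ d j)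
    (h2 : ∀ l, ∑ j, d j * a l j = n - 1)
    (h3 : ∑ j, d j ≤ Fintype.card Λ + 2 * Fintype.card J) :
    (∃ j, 2 < d j) ∧ ∀ j, 2 < d j → d j = n - 1 := by
  classical
  have hpos : ∀ l, 1 ≤ ∑ j, a l j := by
    intro l
    by_contra hc
    have h0 : ∑ j, a l j = 0 := by omega
    rw [Finset.sum_eq_zero_iff] at h0
    have := h2 l
    rw [Finset.sum_eq_zero (fun j hj => by rw [h0 j hj, mul_zero])] at this
    omega
  have hcard : Fintype.card Λ ≤ ∑ l, ∑ j, a l j := by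
    calc Fintype.card Λ = ∑ l : Λ, 1 := by simp
      _ ≤ _ := Finset.sum_le_sum fun l _ => hpos l
  have hsum : ∑ j, (∑ l, a l j + 2) ≤ ∑ j, d j := Finset.sum_le_sum fun j _ => h1 j
  have hsum2 : ∑ j, (∑ l, a l j + 2) = ∑ l, ∑ j, a l j + 2 * Fintype.card J := by
    rw [Finset.sum_add_distrib, Finset.sum_comm]; simp [mul_comm]
  have e1 : ∑ j, (∑ l, a l j + 2) = ∑ j, d j := by omega
  have e2 : ∑ l : Λ, 1 = ∑ l, ∑ j, a l j := by
    have : ∑ l : Λ, 1 = Fintype.card Λ := by simp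
    omega
  have f1 := (Finset.sum_eq_sum_iff_of_le fun j _ => h1 j).1 e1
  have f2 := (Finset.sum_eq_sum_iff_of_le fun l _ => hpos l).1 e2
  have key : ∀ l j, a l j ≠ 0 → d j = n - 1 := by
    intro l j hj
    have h5 := f2 l (Finset.mem_univ _)
    have h6 : ∑ i, a l i = a l j := by
      rw [Finset.sum_eq_single_of_mem j (Finset.mem_univ _)]
      intro i _ hij
      by_contra hi
      have : ∑ i ∈ ({i, j} : Finset J), a l i ≤ ∑ i, a l i :=
        Finset.sum_le_sum_of_subset (Finset.subset_univ _)
      rw [Finset.sum_pair hij] at this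
      omega
    have h7 := h2 l
    have h8 : ∀ i, i ≠ j → a l i = 0 := by
      intro i hij
      by_contra hi
      have : ∑ i ∈ ({i, j} : Finset J), a l i ≤ ∑ i, a l i :=
        Finset.sum_le_sum_of_subset (Finset.subset_univ _)
      rw [Finset.sum_pair hij] at this
      omega
    rw [Finset.sum_eq_single_of_mem j (Finset.mem_univ _)
      (fun i _ hi => by rw [h8 i hi, mul_zero])] at h7
    have : a l j = 1 := by omega
    rw [this, mul_one] at h7
    exact h7
  constructor
  · obtain ⟨l⟩ := ‹Nonempty Λ›
    have := hpos l
    obtain ⟨j, -, hj⟩ := Finset.exists_ne_zero_of_sum_ne_zero (by omega : ∑ j, a l j ≠ 0)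
    refine ⟨j, ?_⟩
    have h8 : a l j ≤ ∑ l, a l j := Finset.single_le_sum (f := fun l => a l j) (fun _ _ => Nat.zero_le _) (Finset.mem_univ l)
    have := h1 j
    omega
  · intro j hj
    have := f1 j (Finset.mem_univ _)
    obtain ⟨l, -, hl⟩ := Finset.exists_ne_zero_of_sum_ne_zero (by omega : ∑ l, a l j ≠ 0)
    exact key l j hl

section GT
open scoped commutatorElement

theorem gt_aux (Q : Type) [Group Q] [Finite Q] (N : Subgroup Q) [N.Normal] (hperf : commutator N = ⊤)
    (hmin : ∀ K : Subgroup Q, K.Normal → K ≤ N → K = ⊥ ∨ K = N) (p : ℕ) (hp : p.Prime)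
    (hpN : p ∣ Nat.card N) :
    ∃ Y : Subgroup Q, Y ⊔ N = ⊤ ∧ 2 ≤ Y.index ∧ Y.index ∣ Nat.card N ∧ ¬ p ∣ Y.index ∧
      ∃ y₁ ∈ Y ⊓ N, ∃ y₂ ∈ Y ⊓ N, ⁅y₁, y₂⁆ ≠ 1 := by
  have : Fact p.Prime := ⟨hp⟩
  have P : Sylow p N := default
  have hP0 : (P : Subgroup N) ≠ ⊥ := P.ne_bot_of_dvd_card hpN
  have hsolv : ¬ Group.IsSolvable N := by
    intro hs
    have hnt : Nontrivial N := by
      by_contra hh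
      rw [not_nontrivial_iff_subsingleton] at hh
      exact hP0 (Subsingleton.elim _ _)
    exact (Group.IsSolvable.commutator_lt_top_of_nontrivial N).ne hperf
  set R : Subgroup Q := (P : Subgroup N).map N.subtype with hR
  have hRN : R ≤ N := Subgroup.map_subtype_le _
  set Y : Subgroup Q := Subgroup.normalizer (R : Set Q) with hYdef
  have hRY : R ≤ Y := Subgroup.le_normalizer
  have hYN : Y ⊔ N = ⊤ := Sylow.normalizer_sup_eq_top P
  have hidx : Y.index = Y.relIndex N := by
    have e1 := Subgroup.relIndex_sup_right Y N
    rw [hYN, Subgroup.relIndex_top_right] at e1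
    have e2 := Subgroup.relIndex_mul_index (inf_le_left : Y ⊓ N ≤ Y)
    have e3 := Subgroup.relIndex_mul_index (inf_le_right : Y ⊓ N ≤ N)
    rw [Subgroup.inf_relIndex_left, ← e1] at e2
    rw [Subgroup.inf_relIndex_right, ← e2, mul_comm] at e3
    exact (Nat.eq_of_mul_eq_mul_left (Nat.pos_of_ne_zero Subgroup.FiniteIndex.index_ne_zero) e3).symm
  have hdvd : ¬ p ∣ Y.relIndex N := by
    intro h
    have h1 : Y.relIndex N ∣ R.relIndex N := Subgroup.relIndex_dvd_of_le_left N hRY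
    have h2 : R.relIndex N = (P : Subgroup N).index := by
      rw [Subgroup.relIndex, hR, Subgroup.subgroupOf, Subgroup.comap_map_eq_self_of_injective N.subtype_injective]
    exact P.not_dvd_index (h2 ▸ h.trans h1)
  refine ⟨Y, hYN, ?_, hidx ▸ Subgroup.relIndex_dvd_card Y N, hidx ▸ hdvd, ?_⟩
  · have h0 : Y.index ≠ 0 := Subgroup.FiniteIndex.index_ne_zero
    have h1 : Y.index ≠ 1 := by
      rw [Ne, Subgroup.index_eq_one]
      intro hT
      have hn : R.Normal := Subgroup.normalizer_eq_top_iff.1 hT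
      rcases hmin R hn hRN with h | h
      · rw [hR, Subgroup.map_eq_bot_iff_of_injective _ N.subtype_injective] at h
        exact hP0 h
      · have hPt : (P : Subgroup N) = ⊤ := by
          apply Subgroup.map_injective N.subtype_injective
          rw [← hR, h, ← MonoidHom.range_eq_map, Subgroup.range_subtype]
        have hpg : IsPGroup p N := by
          have := P.isPGroup'
          rw [hPt] at this
          exact this.of_equiv Subgroup.topEquiv
        have := hpg.isNilpotent
        exact hsolv inferInstance
    omega
  · by_contra! hc
    have hNC : Subgroup.normalizer ((P : Subgroup N) : Set N) ≤ Subgroup.centralizer (P : Set N) := by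
      intro x hx y hy
      have hy' : (y : Q) ∈ R := ⟨y, hy, rfl⟩
      have hx' : (x : Q) ∈ Y := by
        rw [hYdef, Subgroup.mem_normalizer_iff]
        rw [Subgroup.mem_normalizer_iff] at hx
        intro z
        constructor
        · rintro ⟨w, hw, rfl⟩
          exact ⟨x * w * x⁻¹, (hx w).1 hw, rfl⟩
        · rintro ⟨w, hw, hwz⟩
          have hz : z = ((x⁻¹ * w * x : N) : Q) := by
            have : (w : Q) = x * z * (x : Q)⁻¹ := hwz
            push_cast
            rw [this]; group
          refine ⟨x⁻¹ * w * x, (hx _).2 ?_, hz.symm⟩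
          have hw2 : x * (x⁻¹ * w * x) * x⁻¹ = w := by group
          rw [hw2]
          exact hw
      have := hc y ⟨hRY hy', y.2⟩ x ⟨hx', x.2⟩
      rw [commutatorElement_eq_one_iff_mul_comm] at this
      exact Subtype.ext this
    have hcomp := MonoidHom.ker_transferSylow_isComplement' P hNC
    have hcommP : ∀ a b : P, a * b = b * a := by
      intro a b
      exact Subtype.ext (hNC (Subgroup.le_normalizer b.2) a a.2)
    have hker : (MonoidHom.transferSylow P hNC).ker = ⊤ := by
      rw [eq_top_iff, ← hperf, commutator_def, Subgroup.commutator_le]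
      intro a _ b _
      rw [MonoidHom.mem_ker, map_commutatorElement, commutatorElement_eq_one_iff_mul_comm]
      exact hcommP _ _
    rw [hker] at hcomp
    exact hP0 (by simpa using hcomp)

theorem gt_main (G : Type) [Group G] [Finite G] (N M : Subgroup G) [N.Normal] [M.Normal]
    (hperf : ⁅N, N⁆ = N) (hMN : M < N)
    (hmax : ∀ K : Subgroup G, K.Normal → M ≤ K → K < N → K = M) (p : ℕ) (hp : p.Prime)
    (hpN : p ∣ M.relIndex N) :
    ∃ Y : Subgroup G, M ≤ Y ∧ Y ⊔ N = ⊤ ∧ 2 ≤ Y.index ∧ Y.index ∣ M.relIndex N ∧ ¬ p ∣ Y.index ∧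
      ∃ y₁ ∈ Y ⊓ N, ∃ y₂ ∈ Y ⊓ N, ⁅y₁, y₂⁆ ∉ M := by
  let f := QuotientGroup.mk' M
  have hf : Function.Surjective f := QuotientGroup.mk'_surjective M
  have hfk : f.ker = M := QuotientGroup.ker_mk' M
  have hn : (N.map f).Normal := Subgroup.Normal.map ‹_› f hf
  have hcard : Nat.card (N.map f) = M.relIndex N := by
    have h0 := Subgroup.relIndex_ker N f
    rw [hfk] at h0
    exact h0.symm
  have hcm : (N.map f).comap f = N := by
    rw [Subgroup.comap_map_eq, hfk, sup_eq_left]; exact hMN.le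
  have hperf2 : commutator (N.map f) = ⊤ := by
    have h1 : ⁅N.map f, N.map f⁆ = N.map f := by rw [← Subgroup.map_commutator, hperf]
    apply Subgroup.map_injective (N.map f).subtype_injective
    rw [commutator_def, Subgroup.map_commutator]
    rw [← MonoidHom.range_eq_map, Subgroup.range_subtype]
    exact h1
  obtain ⟨Y, hYN, h2, hd, hnd, y₁, h₁, y₂, h₂, hne⟩ := gt_aux (G ⧸ M) (N.map f) hperf2 (by
    intro K hK hKN
    by_cases h : K.comap f = N
    · right; rw [← h, Subgroup.map_comap_eq_self_of_surjective hf]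
    · left
      have h3 : K.comap f ≤ N := by rw [← hcm]; exact Subgroup.comap_mono hKN
      have h4 := hmax (K.comap f) inferInstance (hfk.symm.le.trans (f.ker_le_comap K))
        (lt_of_le_of_ne h3 h)
      rw [← Subgroup.map_comap_eq_self_of_surjective hf K, h4, Subgroup.map_eq_bot_iff, hfk]) p hp
    (hcard ▸ hpN)
  obtain ⟨x₁, rfl⟩ := hf y₁
  obtain ⟨x₂, rfl⟩ := hf y₂
  refine ⟨Y.comap f, hfk.symm.le.trans (f.ker_le_comap Y), ?_, ?_, ?_, ?_, x₁, ?_, x₂, ?_, ?_⟩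
  · have h6 : (Y ⊔ N.map f).comap f = ⊤ := by rw [hYN]; simp
    rw [← Subgroup.comap_sup_eq _ _ _ hf, hcm] at h6
    exact h6
  · rwa [Subgroup.index_comap_of_surjective _ hf]
  · rwa [Subgroup.index_comap_of_surjective _ hf, ← hcard]
  · rwa [Subgroup.index_comap_of_surjective _ hf]
  · rw [← hcm]; exact h₁
  · rw [← hcm]; exact h₂
  · intro h
    apply hne
    rw [← map_commutatorElement, ← MonoidHom.mem_ker, hfk]
    exact h
end GT

section RepTheory

open Representation

variable {G : Type} [Group G] [Fintype G]

theorem inv_card_ne : (Nat.card G : ℂ) ≠ 0 := by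
  exact_mod_cast Nat.card_pos.ne'

theorem irr_of_irreducible {V : Type} [AddCommGroup V] [Module ℂ V] [FiniteDimensional ℂ V]
    (ρ : Representation ℂ G V) [IsIrreducible ρ] : IsIrrChar G ρ.character := by
  have := invertibleOfNonzero (inv_card_ne (G := G))
  refine ⟨FDRep.of ρ, ?_, ?_⟩
  · rw [FDRep.simple_iff_char_is_norm_one]
    have h := char_orthonormal ρ ρ
    rw [if_pos ⟨Representation.Equiv.refl ρ⟩] at h
    have h2 : ∑ g : G, ρ.character g * ρ.character g⁻¹ = Nat.card G := by
      field_simp [inv_card_ne (G := G)] at h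
      simpa using h
    exact h2
  · rfl

theorem irreducible_of_simple (V : FDRep ℂ G) (h : CategoryTheory.Simple V) :
    IsIrreducible (V.ρ : Representation ℂ G V) := by
  have := invertibleOfNonzero (inv_card_ne (G := G))
  rw [FDRep.simple_iff_char_is_norm_one] at h
  set ρ : Representation ℂ G V := V.ρ with hρ
  have h1 : Module.finrank ℂ (IntertwiningMap ρ ρ) = 1 := by
    have h2 := card_inv_mul_sum_char_mul_char_eq_finrank ρ ρ
    have h3 : ∑ g : G, ρ.character g * ρ.character g⁻¹ = Nat.card G := h
    rw [h3, inv_mul_cancel₀ (inv_card_ne (G := G))] at h2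
    exact_mod_cast h2.symm
  rw [(IntertwiningMap.equivLinearMapAsModule ρ ρ).finrank_eq] at h1
  rw [irreducible_iff_isSimpleModule_asModule, isSimpleModule_iff]
  have hnt : Nontrivial (ρ.asModule →ₗ[MonoidAlgebra ℂ G] ρ.asModule) :=
    Module.nontrivial_of_finrank_pos (R := ℂ) (by omega)
  have hid : (LinearMap.id : ρ.asModule →ₗ[MonoidAlgebra ℂ G] ρ.asModule) ≠ 0 := by
    intro h0
    obtain ⟨f, hf⟩ := exists_ne (0 : ρ.asModule →ₗ[MonoidAlgebra ℂ G] ρ.asModule)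
    apply hf
    have : f = LinearMap.id.comp f := rfl
    rw [this, h0]; rfl
  have hnt2 : Nontrivial ρ.asModule := by
    by_contra hh
    rw [not_nontrivial_iff_subsingleton] at hh
    exact hid (Subsingleton.elim _ _)
  refine { exists_pair_ne := ⟨⊥, ⊤, bot_ne_top⟩, eq_bot_or_eq_top := ?_ }
  intro p
  obtain ⟨q, hpq⟩ := MonoidAlgebra.Submodule.exists_isCompl p
  obtain ⟨c, hc⟩ := (finrank_eq_one_iff_of_nonzero' _ hid).mp h1 (p.subtype.comp (Submodule.projectionOnto p q hpq))
  by_cases hc0 : c = 0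
  · left
    rw [eq_bot_iff]
    intro x hx
    have := congrArg (fun f => f x) hc
    have h4 := Submodule.projectionOnto_apply_left hpq ⟨x, hx⟩
    have h5 : c • x = ((Submodule.projectionOnto p q hpq x : p) : ρ.asModule) := this
    rw [h4, hc0, zero_smul] at h5
    exact h5.symm
  · right
    rw [eq_top_iff]
    intro x _
    have h5 := congrArg (fun f => f (c⁻¹ • x)) hc
    have h6 : x = ((Submodule.projectionOnto p q hpq) (c⁻¹ • x) : ρ.asModule) := by
      simpa [hc0] using h5
    rw [h6]
    exact Subtype.property _

theorem irr_iff (χ : G → ℂ) : IsIrrChar G χ ↔ ∃ V : FDRep ℂ G,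
    IsIrreducible (V.ρ : Representation ℂ G V) ∧ χ = V.character := by
  constructor
  · rintro ⟨V, hV, rfl⟩
    exact ⟨V, irreducible_of_simple V hV, rfl⟩
  · rintro ⟨V, hV, rfl⟩
    exact irr_of_irreducible (V.ρ : Representation ℂ G V)

open scoped Classical in
theorem irr_orth {χ ψ : G → ℂ} (hχ : IsIrrChar G χ) (hψ : IsIrrChar G ψ) :
    ∑ g : G, χ g * ψ g⁻¹ = if χ = ψ then (Nat.card G : ℂ) else 0 := by
  have := invertibleOfNonzero (inv_card_ne (G := G))
  obtain ⟨V, hV, rfl⟩ := hχ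
  obtain ⟨W, hW, rfl⟩ := hψ
  have h := FDRep.char_orthonormal V W
  have hVV := (FDRep.simple_iff_char_is_norm_one V).1 hV
  split_ifs with he
  · rw [← he]; exact hVV
  · rw [if_neg] at h
    · exact (mul_eq_zero.1 h).resolve_left (inv_ne_zero (inv_card_ne (G := G)))
    · rintro ⟨i⟩; exact he (FDRep.char_iso i)

theorem irr_linInd : LinearIndependent ℂ (fun χ : {χ : G → ℂ // IsIrrChar G χ} => χ.1) := by
  classical
  rw [linearIndependent_iff']
  intro s c h i hi
  have h2 : ∑ g : G, (∑ j ∈ s, c j • j.1) g * i.1 g⁻¹ = 0 := by rw [h]; simp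
  simp only [Finset.sum_apply, Pi.smul_apply, smul_eq_mul, Finset.sum_mul] at h2
  rw [Finset.sum_comm] at h2
  simp only [mul_assoc, ← Finset.mul_sum, irr_orth (Subtype.property _) i.2] at h2
  rw [Finset.sum_eq_single i] at h2
  · simpa [inv_card_ne (G := G)] using h2
  · intro j _ hj
    rw [if_neg (fun h => hj (Subtype.ext h)), mul_zero]
  · exact fun h => absurd hi h

instance irr_finite : Finite {χ : G → ℂ // IsIrrChar G χ} :=
  (irr_linInd (G := G)).finite

theorem irr_complete_irred (f : G → ℂ) (hf : ∀ g h, f (h * g * h⁻¹) = f g)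
    (h0 : ∀ χ, IsIrrChar G χ → ∑ g : G, f g * χ g⁻¹ = 0)
    {V : Type} [AddCommGroup V] [Module ℂ V] [FiniteDimensional ℂ V]
    (ρ : Representation ℂ G V) [IsIrreducible ρ] : ∑ g : G, f g • ρ g⁻¹ = 0 := by
  let z : IntertwiningMap ρ ρ := ⟨∑ g : G, f g • ρ g⁻¹, by
    intro x
    have e1 : (∑ g : G, f g • ρ g⁻¹) ∘ₗ ρ x = ∑ g : G, f g • ρ (g⁻¹ * x) := by
      ext v; simp [LinearMap.sum_apply]
    have e2 : ρ x ∘ₗ (∑ g : G, f g • ρ g⁻¹) = ∑ g : G, f g • ρ (x * g⁻¹) := by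
      ext v; simp [LinearMap.sum_apply]
    rw [e1, e2]
    refine Fintype.sum_equiv (MulAut.conj x⁻¹).toEquiv _ _ ?_
    intro g
    simp only [MulEquiv.toEquiv_eq_coe, EquivLike.coe_coe, MulAut.conj_apply, hf]
    congr 2
    group⟩
  obtain ⟨c, hc⟩ := (IsIrreducible.algebraMap_intertwiningMap_bijective_of_isAlgClosed (ρ := ρ)).2 z
  have hz : (∑ g : G, f g • ρ g⁻¹) = c • LinearMap.id := by
    have : z.toLinearMap = (algebraMap ℂ (IntertwiningMap ρ ρ) c).toLinearMap := by rw [hc]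
    rw [show (∑ g : G, f g • ρ g⁻¹) = z.toLinearMap from rfl, this]
    ext v
    simp [Algebra.algebraMap_eq_smul_one]
  have ht := congrArg (LinearMap.trace ℂ V) hz
  have h1 := h0 _ (irr_of_irreducible ρ)
  simp only [Representation.character] at h1
  simp only [map_sum, map_smul, smul_eq_mul, LinearMap.trace_id, h1] at ht
  have hV : Nontrivial V := by
    by_contra hh
    rw [not_nontrivial_iff_subsingleton] at hh
    obtain ⟨a, b, hab⟩ := (inferInstance : Nontrivial (Subrepresentation ρ))
    apply hab
    apply Subrepresentation.toSubmodule_injective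
    exact Subsingleton.elim _ _
  have : (Module.finrank ℂ V : ℂ) ≠ 0 := by exact_mod_cast Module.finrank_pos.ne'
  have hc0 : c = 0 := by
    rcases mul_eq_zero.1 ht.symm with h | h
    · exact h
    · exact absurd h this
  rw [hz, hc0, zero_smul]

theorem irr_complete (f : G → ℂ) (hf : ∀ g h, f (h * g * h⁻¹) = f g)
    (h0 : ∀ χ, IsIrrChar G χ → ∑ g : G, f g * χ g⁻¹ = 0) : f = 0 := by
  classical
  let z : MonoidAlgebra ℂ G := ∑ g : G, MonoidAlgebra.single g⁻¹ (f g)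
  have key : ∀ S : Submodule (MonoidAlgebra ℂ G) (MonoidAlgebra ℂ G),
      IsSimpleModule (MonoidAlgebra ℂ G) S → ∀ x ∈ S, z * x = 0 := by
    intro S hS x hx
    have hirr := (isSimpleModule_iff_irreducible_ofModule (k := ℂ) (G := G) S).1 hS
    let _ := RestrictScalars.moduleOrig ℂ (MonoidAlgebra ℂ G) S
    have : Module.Finite (MonoidAlgebra ℂ G) (RestrictScalars ℂ (MonoidAlgebra ℂ G) S) :=
      (inferInstance : Module.Finite (MonoidAlgebra ℂ G) S)
    have : Module.Finite ℂ (RestrictScalars ℂ (MonoidAlgebra ℂ G) S) :=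
      Module.Finite.trans (MonoidAlgebra ℂ G) _
    have h := @irr_complete_irred G _ _ f hf h0 (RestrictScalars ℂ (MonoidAlgebra ℂ G) S)
      (inferInstanceAs (AddCommGroup S))
      (RestrictScalars.module ℂ (MonoidAlgebra ℂ G) S) this (ofModule (k := ℂ) (G := G) S) hirr
    have hz : (ofModule (k := ℂ) (G := G) S).asAlgebraHom z = 0 := by
      refine Eq.trans ?_ h
      simp only [z, map_sum, asAlgebraHom_single]
      rfl
    have h2 := ofModule_asAlgebraHom_apply_apply (k := ℂ) (G := G) (M := S) z
      ((RestrictScalars.addEquiv ℂ (MonoidAlgebra ℂ G) S).symm ⟨x, hx⟩)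
    rw [hz] at h2
    simp at h2
    exact congrArg Subtype.val ((AddEquiv.map_eq_zero_iff _).1 h2.symm)
  have hall : ∀ x : MonoidAlgebra ℂ G, z * x = 0 := by
    intro x
    have hx : x ∈ sSup {m : Submodule (MonoidAlgebra ℂ G) (MonoidAlgebra ℂ G) |
        IsSimpleModule (MonoidAlgebra ℂ G) m} := by
      rw [IsSemisimpleModule.sSup_simples_eq_top]; trivial
    rw [sSup_eq_iSup] at hx
    induction hx using Submodule.iSup_induction' with
    | mem S x hx =>
      by_cases hS : S ∈ {m : Submodule (MonoidAlgebra ℂ G) (MonoidAlgebra ℂ G) |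
        IsSimpleModule (MonoidAlgebra ℂ G) m}
      · simp only [hS, iSup_pos] at hx
        exact key S hS x hx
      · simp only [hS, iSup_false] at hx
        simp at hx
        simp [hx]
    | zero => simp
    | add x y _ _ hx hy => rw [mul_add, hx, hy, add_zero]
  have hz := hall 1
  rw [mul_one] at hz
  funext g
  have h3 := congrArg (fun w : MonoidAlgebra ℂ G => w.coeff g⁻¹) hz
  simp [z, MonoidAlgebra.coeff_sum, Finsupp.single_apply] at h3
  simpa using h3

end RepTheory

section RepTheory2
open Representation
variable {G : Type} [Group G] [Fintype G]

abbrev Irr (G : Type) [Group G] := {χ : G → ℂ // IsIrrChar G χ}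

noncomputable instance irr_fintype : Fintype (Irr G) := Fintype.ofFinite _

theorem irr_exists_rep (χ : Irr G) : ∃ V : FDRep ℂ G,
    IsIrreducible (V.ρ : Representation ℂ G V) ∧ χ.1 = V.character := (irr_iff χ.1).1 χ.2

noncomputable def irrRep (χ : Irr G) : FDRep ℂ G := (irr_exists_rep χ).choose

abbrev irrV (χ : Irr G) : Type := irrRep χ

noncomputable def irrRho (χ : Irr G) : Representation ℂ G (irrV χ) := (irrRep χ).ρ

instance irrRho_irreducible (χ : Irr G) : IsIrreducible (irrRho χ) :=
  (irr_exists_rep χ).choose_spec.1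

theorem irrRho_character (χ : Irr G) : (irrRho χ).character = χ.1 :=
  (irr_exists_rep χ).choose_spec.2.symm

noncomputable def irrDeg (χ : Irr G) : ℕ := Module.finrank ℂ (irrV χ)

theorem irr_one (χ : Irr G) : χ.1 1 = irrDeg χ := by
  rw [← irrRho_character]; simp [irrDeg]

theorem irr_conj (χ : Irr G) (g h : G) : χ.1 (h * g * h⁻¹) = χ.1 g := by
  rw [← irrRho_character]; simp

theorem charDegreeSum_eq : charDegreeSum G = ((∑ χ : Irr G, irrDeg χ : ℕ) : ℝ) := by
  unfold charDegreeSum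
  have hfin : Set.Finite {χ : G → ℂ | IsIrrChar G χ} := irr_finite (G := G)
  rw [finsum_mem_eq_finite_toFinset_sum _ hfin]
  push_cast
  refine (Finset.sum_subtype (p := IsIrrChar G) (F := irr_fintype) _ (by simp) _).trans ?_
  refine Finset.sum_congr rfl fun χ _ => ?_
  rw [irr_one]; simp

open scoped Classical in
theorem irr_col (g : G) : ∑ χ : Irr G, (irrDeg χ : ℂ) * χ.1 g = if g = 1 then (Nat.card G : ℂ) else 0 := by
  let f : G → ℂ := fun g => ∑ χ : Irr G, (irrDeg χ : ℂ) * χ.1 g - if g = 1 then (Nat.card G : ℂ) else 0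
  have hf : f = 0 := by
    apply irr_complete
    · intro g h
      have : h * g * h⁻¹ = 1 ↔ g = 1 := by
        rw [mul_inv_eq_one]; simp
      simp only [f, irr_conj, this]
    · intro ψ hψ
      simp only [f, sub_mul, Finset.sum_sub_distrib, Finset.sum_mul]
      rw [Finset.sum_comm]
      simp only [mul_assoc, ← Finset.mul_sum, irr_orth (Subtype.property _) hψ]
      rw [Finset.sum_eq_single (⟨ψ, hψ⟩ : Irr G)]
      · have := irr_one (⟨ψ, hψ⟩ : Irr G)
        simp only at this
        simp [this, mul_comm]
      · intro j _ hj
        rw [if_neg (fun h => hj (Subtype.ext h)), mul_zero]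
      · simp
  have := congrFun hf g
  simpa [f, sub_eq_zero] using this

theorem card_conj_le : Nat.card (ConjClasses G) ≤ Fintype.card (Irr G) := by
  classical
  let L : (ConjClasses G → ℂ) →ₗ[ℂ] (Irr G → ℂ) :=
    { toFun := fun F χ => ∑ g : G, F (ConjClasses.mk g) * χ.1 g⁻¹
      map_add' := by intro F F'; ext χ; simp [add_mul, Finset.sum_add_distrib]
      map_smul' := by intro c F; ext χ; simp [Finset.mul_sum, mul_assoc] }
  have hL : Function.Injective L := by
    rw [injective_iff_map_eq_zero]
    intro F hF
    have : (fun g => F (ConjClasses.mk g)) = 0 := by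
      apply irr_complete
      · intro g h
        congr 1
        rw [ConjClasses.mk_eq_mk_iff_isConj]
        exact (isConj_iff.2 ⟨h, rfl⟩).symm
      · intro χ hχ
        exact congrFun hF ⟨χ, hχ⟩
    ext c
    obtain ⟨g, rfl⟩ := ConjClasses.exists_rep c
    exact congrFun this g
  have := LinearMap.finrank_le_finrank_of_injective hL
  simpa [Nat.card_eq_fintype_card] using this

def wt {V : Type} [AddCommGroup V] [Module ℂ V] (ρ : Representation ℂ G V) (Y : Subgroup G)
    (μ : G →* ℂ) : Submodule ℂ V where
  carrier := {v | ∀ y ∈ Y, ρ y v = μ y • v}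
  add_mem' := by
    intro a b ha hb y hy
    rw [map_add, ha y hy, hb y hy, smul_add]
  zero_mem' := by intro y _; simp
  smul_mem' := by
    intro c v hv y hy
    rw [map_smul, hv y hy, smul_comm]

theorem mem_wt {V : Type} [AddCommGroup V] [Module ℂ V] {ρ : Representation ℂ G V} {Y : Subgroup G}
    {μ : G →* ℂ} {v : V} : v ∈ wt ρ Y μ ↔ ∀ y ∈ Y, ρ y v = μ y • v := Iff.rfl

theorem mu_inv_mul (μ : G →* ℂ) (g : G) : μ g⁻¹ * μ g = 1 := by
  rw [← map_mul]; simp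

theorem finrank_wt {V : Type} [AddCommGroup V] [Module ℂ V] [FiniteDimensional ℂ V]
    (ρ : Representation ℂ G V) (Y : Subgroup G) [Fintype Y] (μ : G →* ℂ) :
    (Nat.card Y : ℂ)⁻¹ * ∑ y : Y, μ (y : G)⁻¹ * ρ.character (y : G) = Module.finrank ℂ (wt ρ Y μ) := by
  have := invertibleOfNonzero (inv_card_ne (G := Y))
  let τ : Representation ℂ Y V :=
    { toFun := fun y => μ (y : G)⁻¹ • ρ (y : G)
      map_one' := by simp
      map_mul' := by
        intro a b
        ext v
        simp [smul_smul, mul_comm] }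
  have h := card_inv_mul_sum_char_eq_finrank (ρ := τ)
  have h1 : invariants τ = wt ρ Y μ := by
    ext v
    rw [mem_invariants, mem_wt]
    constructor
    · intro h y hy
      have h2 : μ y⁻¹ • ρ y v = v := h ⟨y, hy⟩
      conv_rhs => rw [← h2]
      rw [smul_smul, mul_comm, mu_inv_mul, one_smul]
    · intro h y
      change μ (y : G)⁻¹ • ρ y v = v
      rw [h y y.2, smul_smul, mu_inv_mul, one_smul]
  rw [← h1, ← h]
  congr 1
  refine Finset.sum_congr rfl fun y _ => ?_
  simp [Representation.character, τ]

/-- multiplicities -/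
noncomputable def mult (Y : Subgroup G) (μ : G →* ℂ) (χ : Irr G) : ℕ :=
  Module.finrank ℂ (wt (irrRho χ) Y μ)

theorem sum_mult (Y : Subgroup G) (μ : G →* ℂ) : ∑ χ : Irr G, irrDeg χ * mult Y μ χ = Y.index := by
  classical
  have h : (∑ χ : Irr G, (irrDeg χ : ℂ) * mult Y μ χ) = Y.index := by
    simp only [mult, ← finrank_wt, irrRho_character]
    have : ∀ χ : Irr G, (irrDeg χ : ℂ) * ((Nat.card Y : ℂ)⁻¹ * ∑ y : Y, μ (y : G)⁻¹ * χ.1 (y : G))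
      = (Nat.card Y : ℂ)⁻¹ * ∑ y : Y, μ (y : G)⁻¹ * ((irrDeg χ : ℂ) * χ.1 (y : G)) := by
      intro χ
      simp only [Finset.mul_sum]
      refine Finset.sum_congr rfl fun y _ => ?_
      ring
    simp only [this]
    rw [← Finset.mul_sum, Finset.sum_comm]
    simp only [← Finset.mul_sum, irr_col]
    rw [Finset.sum_eq_single (1 : Y)]
    · have h3 := Y.card_mul_index
      have h4 : (Nat.card Y : ℂ) ≠ 0 := inv_card_ne
      rw [← h3]
      push_cast
      field_simp
      simp
    · intro y _ hy
      have hy1 : (y : G) ≠ 1 := fun h => hy (Subtype.ext h)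
      rw [if_neg hy1, mul_zero]
    · simp
  exact_mod_cast h
end RepTheory2

section RepTheory3
open Representation
open scoped commutatorElement
variable {G : Type} [Group G] [Fintype G]
variable {V : Type} [AddCommGroup V] [Module ℂ V]

theorem subrep_eq_top (ρ : Representation ℂ G V) [IsIrreducible ρ] (W : Submodule ℂ V)
    (hW : ∀ g, ∀ v ∈ W, ρ g v ∈ W) {w : V} (hw : w ∈ W) (hw0 : w ≠ 0) : W = ⊤ := by
  let S : Subrepresentation ρ := ⟨W, fun g v hv => hW g v hv⟩
  rcases eq_bot_or_eq_top S with h | h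
  · exfalso
    have : w ∈ S.toSubmodule := hw
    rw [h] at this
    exact hw0 this
  · have : S.toSubmodule = ⊤ := by rw [h]; rfl
    exact this

theorem irr_nontrivial (ρ : Representation ℂ G V) [IsIrreducible ρ] : Nontrivial V := by
  by_contra hh
  rw [not_nontrivial_iff_subsingleton] at hh
  obtain ⟨a, b, hab⟩ := (inferInstance : Nontrivial (Subrepresentation ρ))
  apply hab
  apply Subrepresentation.toSubmodule_injective
  exact Subsingleton.elim _ _

theorem normal_acts_trivially (ρ : Representation ℂ G V) [IsIrreducible ρ] (M : Subgroup G)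
    [M.Normal] {w : V} (hw0 : w ≠ 0) (hw : ∀ m ∈ M, ρ m w = w) : ∀ m ∈ M, ρ m = 1 := by
  have h := subrep_eq_top ρ (wt ρ M 1) (w := w) (by
    intro g v hv m hm
    have h1 := hv (g⁻¹ * m * g) (by simpa using Subgroup.Normal.conj_mem ‹M.Normal› m hm g⁻¹)
    simp only [MonoidHom.one_apply, one_smul] at h1 ⊢
    conv_rhs => rw [← h1]
    rw [← Module.End.mul_apply, ← Module.End.mul_apply, ← map_mul, ← map_mul]
    congr 2
    group) (by intro m hm; simpa using hw m hm) hw0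
  intro m hm
  ext v
  have : v ∈ wt ρ M 1 := by rw [h]; trivial
  simpa using this m hm

theorem scalar_of_weight (ρ : Representation ℂ G V) [IsIrreducible ρ] (Y N : Subgroup G)
    (hYN : Y ⊔ N = ⊤) (μ : G →* ℂ) (hN : ∀ n ∈ N, ρ n = 1) (hμ : ∀ n ∈ N, μ n = 1)
    {w : V} (hw0 : w ≠ 0) (hw : w ∈ wt ρ Y μ) : ∀ g v, ρ g v = μ g • v := by
  have h1 : ∀ g, ρ g w = μ g • w := by
    intro g
    have hg : g ∈ Y ⊔ N := by rw [hYN]; trivial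
    rw [Subgroup.sup_eq_closure] at hg
    induction hg using Subgroup.closure_induction with
    | mem x hx =>
      rcases hx with hx | hx
      · exact hw x hx
      · rw [hN x hx, hμ x hx]; simp
    | one => simp
    | mul x y _ _ hx hy =>
      rw [map_mul, Module.End.mul_apply, hy, map_smul, hx, map_mul, smul_smul, mul_comm]
    | inv x _ hx =>
      have h3 : ρ x⁻¹ (ρ x w) = w := by
        rw [← Module.End.mul_apply, ← map_mul]; simp
      rw [hx, map_smul] at h3
      conv_rhs => rw [← h3]
      rw [smul_smul, mu_inv_mul, one_smul]
  have h := subrep_eq_top ρ (wt ρ ⊤ μ) (w := w) (by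
    intro g v hv x _
    rw [hv g trivial, map_smul, hv x trivial, smul_comm]) (fun g _ => h1 g) hw0
  intro g v
  have : v ∈ wt ρ ⊤ μ := by rw [h]; trivial
  exact this g trivial

theorem finrank_one_of_scalar (ρ : Representation ℂ G V) [IsIrreducible ρ] (μ : G →* ℂ)
    (h : ∀ g v, ρ g v = μ g • v) : Module.finrank ℂ V = 1 := by
  have := irr_nontrivial ρ
  obtain ⟨w, hw⟩ := exists_ne (0 : V)
  have h2 := subrep_eq_top ρ (Submodule.span ℂ {w}) (w := w) (by
    intro g v hv
    rw [h]
    exact Submodule.smul_mem _ _ hv) (Submodule.mem_span_singleton_self w) hw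
  rw [finrank_eq_one_iff_of_nonzero _ hw]
  exact h2

theorem char_of_scalar [FiniteDimensional ℂ V] (ρ : Representation ℂ G V) [IsIrreducible ρ]
    (μ : G →* ℂ) (h : ∀ g v, ρ g v = μ g • v) : ρ.character = μ := by
  funext g
  have : ρ g = μ g • LinearMap.id := by ext v; simp [h]
  rw [Representation.character, this, map_smul, LinearMap.trace_id, finrank_one_of_scalar ρ μ h]
  simp

theorem scalar_of_finrank_one (ρ : Representation ℂ G V) (h : Module.finrank ℂ V = 1) (g : G) (v : V) :
    ρ g v = ρ.character g • v := by
  have : FiniteDimensional ℂ V := Module.finite_of_finrank_pos (by omega)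
  have : Nontrivial V := Module.nontrivial_of_finrank_pos (R := ℂ) (by omega)
  have h1 : Module.finrank ℂ (V →ₗ[ℂ] V) = 1 := by rw [Module.finrank_linearMap, h]
  have hid : (LinearMap.id : V →ₗ[ℂ] V) ≠ 0 := by
    obtain ⟨w, hw⟩ := exists_ne (0 : V)
    intro h0
    exact hw (LinearMap.congr_fun h0 w)
  obtain ⟨c, hc⟩ := (finrank_eq_one_iff_of_nonzero' _ hid).mp h1 (ρ g)
  have h2 : ρ.character g = c := by
    rw [Representation.character, ← hc, map_smul, LinearMap.trace_id, h]; simp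
  rw [h2, ← hc]; simp

/-- linear characters -/
abbrev Lin (G : Type) [Group G] [Fintype G] := {χ : Irr G // irrDeg χ = 1}

noncomputable def linHom (l : Lin G) : G →* ℂ where
  toFun := l.1.1
  map_one' := by rw [irr_one, l.2]; simp
  map_mul' := by
    intro g h
    have hl : Module.finrank ℂ (irrV l.1) = 1 := l.2
    have : Nontrivial (irrV l.1) := Module.nontrivial_of_finrank_pos (R := ℂ) (by omega)
    obtain ⟨w, hw⟩ := exists_ne (0 : irrV l.1)
    have h1 := scalar_of_finrank_one (irrRho l.1) hl (g * h) w
    rw [map_mul, Module.End.mul_apply, scalar_of_finrank_one (irrRho l.1) hl h w, map_smul,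
      scalar_of_finrank_one (irrRho l.1) hl g w, smul_smul, irrRho_character, mul_comm] at h1
    exact (smul_left_injective ℂ hw h1).symm

theorem linHom_coe (l : Lin G) : (linHom l : G → ℂ) = l.1.1 := rfl

theorem hom_trivial (μ : G →* ℂ) (N : Subgroup G) (hN : N ≤ commutator G) : ∀ n ∈ N, μ n = 1 := by
  have : commutator G ≤ μ.ker := by
    rw [commutator_def, Subgroup.commutator_le]
    intro a _ b _
    rw [MonoidHom.mem_ker, commutatorElement_def, map_mul, map_mul, map_mul]
    have h1 := mu_inv_mul μ a
    have h2 := mu_inv_mul μ b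
    linear_combination (μ b⁻¹ * μ b) * h1 + h2
  intro n hn
  exact this (hN hn)

theorem one_le_deg (χ : Irr G) : 1 ≤ irrDeg χ := by
  have := irr_nontrivial (irrRho χ)
  exact Module.finrank_pos (R := ℂ) (M := irrV χ)

theorem deg_one_trivial (χ : Irr G) (h : irrDeg χ = 1) (N : Subgroup G) (hN : N ≤ commutator G) :
    ∀ n ∈ N, irrRho χ n = 1 := by
  intro n hn
  ext v
  rw [scalar_of_finrank_one (irrRho χ) h, irrRho_character]
  have := hom_trivial (linHom ⟨χ, h⟩) N hN n hn
  rw [linHom_coe] at this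
  simp only at this
  rw [this]; simp

theorem mult_pos {Y : Subgroup G} {μ : G →* ℂ} {χ : Irr G} (h : mult Y μ χ ≠ 0) :
    ∃ w : irrV χ, w ≠ 0 ∧ w ∈ wt (irrRho χ) Y μ := by
  by_contra! hc
  apply h
  have : wt (irrRho χ) Y μ = ⊥ := by
    rw [eq_bot_iff]; intro w hw
    by_contra h0
    exact hc w h0 hw
  rw [mult, this]; simp

open scoped Classical in
theorem mult_trivial (Y N : Subgroup G) (hYN : Y ⊔ N = ⊤) (hN : N ≤ commutator G) (l : Lin G)
    (χ : Irr G) (hχ : ∀ n ∈ N, irrRho χ n = 1) : mult Y (linHom l) χ = if χ = l.1 then 1 else 0 := by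
  split_ifs with h
  · subst h
    have : wt (irrRho l.1) Y (linHom l) = ⊤ := by
      rw [eq_top_iff]
      intro v _ y _
      rw [scalar_of_finrank_one (irrRho l.1) l.2, irrRho_character]; rfl
    rw [mult, this]
    rw [finrank_top]
    exact l.2
  · by_contra h0
    obtain ⟨w, hw0, hw⟩ := mult_pos h0
    have h1 := scalar_of_weight (irrRho χ) Y N hYN (linHom l) hχ (hom_trivial _ N hN) hw0 hw
    have h2 := char_of_scalar (irrRho χ) (linHom l) h1
    rw [irrRho_character, linHom_coe] at h2
    exact h (Subtype.ext h2)

theorem char_orth_sub (Y : Subgroup G) [Fintype Y] (μ ν : G →* ℂ) (h : ∃ y ∈ Y, μ y ≠ ν y) :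
    ∑ y : Y, μ (y : G)⁻¹ * ν (y : G) = 0 := by
  let f : Y →* ℂ :=
    { toFun := fun y => μ (y : G)⁻¹ * ν (y : G)
      map_one' := by simp
      map_mul' := by intro a b; simp; ring }
  refine sum_hom_units_eq_zero f ?_
  intro hf
  obtain ⟨y, hy, hne⟩ := h
  apply hne
  have h1 : μ y⁻¹ * ν y = 1 := DFunLike.congr_fun hf (⟨y, hy⟩ : Y)
  have h2 := mu_inv_mul μ y
  linear_combination (-μ y) * h1 + ν y * h2

theorem comm_trivial_of_codim_le_one [FiniteDimensional ℂ V] (ρ : Representation ℂ G V)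
    (Y : Subgroup G) {Λ : Type} [Fintype Λ] (μ : Λ → (G →* ℂ))
    (hμ : ∀ i j, i ≠ j → ∃ y ∈ Y, μ i y ≠ μ j y)
    (hd : Module.finrank ℂ V ≤ ∑ l, Module.finrank ℂ (wt ρ Y (μ l)) + 1) :
    ∀ y₁ ∈ Y, ∀ y₂ ∈ Y, ρ ⁅y₁, y₂⁆ = 1 := by
  classical
  let Φ : (∀ l, wt ρ Y (μ l)) →ₗ[ℂ] V := ∑ l, (wt ρ Y (μ l)).subtype ∘ₗ LinearMap.proj l
  have hΦ : ∀ w, Φ w = ∑ l, (w l : V) := by intro w; simp [Φ]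
  have hinj : Function.Injective Φ := by
    rw [injective_iff_map_eq_zero]
    intro w hw
    rw [hΦ] at hw
    funext m
    have h1 : ∑ y : Y, μ m (y : G)⁻¹ • ρ (y : G) (∑ l, (w l : V)) = 0 := by rw [hw]; simp
    simp only [map_sum, Finset.smul_sum] at h1
    rw [Finset.sum_comm] at h1
    have h2 : ∀ l, ∑ y : Y, μ m (y : G)⁻¹ • ρ (y : G) (w l : V)
        = (∑ y : Y, μ m (y : G)⁻¹ * μ l (y : G)) • (w l : V) := by
      intro l
      rw [Finset.sum_smul]
      refine Finset.sum_congr rfl fun y _ => ?_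
      rw [(w l).2 y y.2, smul_smul]
    simp only [h2] at h1
    rw [Finset.sum_eq_single m] at h1
    · simp only [mu_inv_mul] at h1
      have h3 : (Nat.card Y : ℂ) ≠ 0 := inv_card_ne
      rw [Nat.card_eq_fintype_card] at h3
      simp only [Finset.sum_const, Finset.card_univ, nsmul_eq_mul, mul_one, smul_eq_zero, h3, false_or] at h1
      exact Subtype.ext h1
    · intro l _ hl
      rw [char_orth_sub Y _ _ (hμ m l hl.symm), zero_smul]
    · simp
  set W := LinearMap.range Φ with hWdef
  have hWdim : Module.finrank ℂ W = ∑ l, Module.finrank ℂ (wt ρ Y (μ l)) := by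
    rw [LinearMap.finrank_range_of_inj hinj, Module.finrank_pi_fintype]
  have hWstab : ∀ y ∈ Y, ∀ w ∈ W, ρ y w ∈ W := by
    rintro y hy _ ⟨w, rfl⟩
    refine ⟨fun l => μ l y • w l, ?_⟩
    rw [hΦ, hΦ, map_sum]
    refine Finset.sum_congr rfl fun l _ => ?_
    rw [(w l).2 y hy]; rfl
  intro y₁ h₁ y₂ h₂
  have hcY : ⁅y₁, y₂⁆ ∈ Y := by
    rw [commutatorElement_def]
    exact Y.mul_mem (Y.mul_mem (Y.mul_mem h₁ h₂) (Y.inv_mem h₁)) (Y.inv_mem h₂)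
  have hWfix : ∀ w ∈ W, ρ ⁅y₁, y₂⁆ w = w := by
    rintro _ ⟨w, rfl⟩
    rw [hΦ, map_sum]
    refine Finset.sum_congr rfl fun l _ => ?_
    rw [(w l).2 _ hcY, hom_trivial (μ l) (commutator G) le_rfl _
      (Subgroup.commutator_mem_commutator trivial trivial), one_smul]
  have hdiff : ∀ v, ρ y₁ (ρ y₂ v) - ρ y₂ (ρ y₁ v) ∈ W := by
    by_cases hT : W = ⊤
    · intro v; rw [hT]; trivial
    obtain ⟨u, -, hu⟩ := SetLike.exists_of_lt (lt_top_iff_ne_top.2 hT)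
    have hsup : W ⊔ Submodule.span ℂ {u} = ⊤ := by
      apply Submodule.eq_top_of_finrank_eq
      have hlt : W < W ⊔ Submodule.span ℂ {u} := by
        refine lt_of_le_of_ne le_sup_left fun he => hu ?_
        rw [he]
        exact Submodule.mem_sup_right (Submodule.mem_span_singleton_self u)
      have h5 := Submodule.finrank_lt_finrank_of_lt hlt
      have h6 := Submodule.finrank_le (W ⊔ Submodule.span ℂ {u})
      omega
    have hdec : ∀ v, ∃ w ∈ W, ∃ c : ℂ, v = w + c • u := by
      intro v
      have : v ∈ W ⊔ Submodule.span ℂ {u} := by rw [hsup]; trivial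
      obtain ⟨w, hw, x, hx, rfl⟩ := Submodule.mem_sup.1 this
      obtain ⟨c, rfl⟩ := Submodule.mem_span_singleton.1 hx
      exact ⟨w, hw, c, rfl⟩
    obtain ⟨w₁, hw₁, c₁, e₁⟩ := hdec (ρ y₁ u)
    obtain ⟨w₂, hw₂, c₂, e₂⟩ := hdec (ρ y₂ u)
    intro v
    obtain ⟨w, hw, t, rfl⟩ := hdec v
    have : ρ y₁ (ρ y₂ (w + t • u)) - ρ y₂ (ρ y₁ (w + t • u))
        = (ρ y₁ (ρ y₂ w) - ρ y₂ (ρ y₁ w)) + t • ((ρ y₁ w₂ + c₂ • w₁) - (ρ y₂ w₁ + c₁ • w₂)) := by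
      simp only [map_add, map_smul, e₁, e₂]
      module
    rw [this]
    exact W.add_mem (W.sub_mem (hWstab _ h₁ _ (hWstab _ h₂ _ hw)) (hWstab _ h₂ _ (hWstab _ h₁ _ hw)))
      (W.smul_mem _ (W.sub_mem (W.add_mem (hWstab _ h₁ _ hw₂) (W.smul_mem _ hw₁))
        (W.add_mem (hWstab _ h₂ _ hw₁) (W.smul_mem _ hw₂))))
  have hdiff2 : ∀ v, ρ ⁅y₁, y₂⁆ v - v ∈ W := by
    intro v
    have := hdiff (ρ y₁⁻¹ (ρ y₂⁻¹ v))
    have e : ρ y₂ (ρ y₁ (ρ y₁⁻¹ (ρ y₂⁻¹ v))) = v := by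
      simp only [← Module.End.mul_apply, ← map_mul]
      simp
    rw [e] at this
    rw [commutatorElement_def, map_mul, map_mul, map_mul]
    exact this
  have hpow : ∀ n : ℕ, ∀ v, ρ (⁅y₁, y₂⁆ ^ n) v = v + n • (ρ ⁅y₁, y₂⁆ v - v) := by
    intro n v
    induction n with
    | zero => simp
    | succ k ih =>
      rw [pow_succ', map_mul, Module.End.mul_apply, ih, map_add, map_nsmul, hWfix _ (hdiff2 v), succ_nsmul]
      abel
  ext v
  have h8 := hpow (orderOf ⁅y₁, y₂⁆) v
  rw [pow_orderOf_eq_one, map_one, Module.End.one_apply, left_eq_add] at h8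
  rw [← Nat.cast_smul_eq_nsmul ℂ, smul_eq_zero] at h8
  rcases h8 with h8 | h8
  · have := orderOf_pos ⁅y₁, y₂⁆
    exfalso
    have h9 : orderOf ⁅y₁, y₂⁆ = 0 := by exact_mod_cast h8
    omega
  · rw [sub_eq_zero] at h8; simpa using h8
end RepTheory3

section RepTheory4
open Representation
open scoped commutatorElement
variable {G : Type} [Group G] [Fintype G]

theorem mult_bound (N M Y : Subgroup G) [N.Normal] [M.Normal] (hN : N ≤ commutator G)
    (hMN : M < N) (hmax : ∀ K : Subgroup G, K.Normal → M ≤ K → K < N → K = M)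
    (hMY : M ≤ Y) (hYN : Y ⊔ N = ⊤)
    (hY : ∃ y₁ ∈ Y ⊓ N, ∃ y₂ ∈ Y ⊓ N, ⁅y₁, y₂⁆ ∉ M)
    (χ : Irr G) (hχ : ¬ ∀ n ∈ N, irrRho χ n = 1) :
    ∑ l : Lin G, mult Y (linHom l) χ + 2 ≤ irrDeg χ := by
  have hd1 := one_le_deg χ
  have hd : irrDeg χ ≠ 1 := fun h => hχ (deg_one_trivial χ h N hN)
  by_cases hM : ∀ m ∈ M, irrRho χ m = 1
  · by_contra hlt
    have hdist : ∀ i j : Lin G, i ≠ j → ∃ y ∈ Y, linHom i y ≠ linHom j y := by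
      intro i j hij
      by_contra! hc
      apply hij
      apply Subtype.ext
      apply Subtype.ext
      rw [← linHom_coe, ← linHom_coe]
      have : Y ⊔ N ≤ (linHom i).eqLocus (linHom j) := by
        apply sup_le
        · exact fun y hy => hc y hy
        · intro n hn
          change linHom i n = linHom j n
          rw [hom_trivial _ N hN n hn, hom_trivial _ N hN n hn]
      rw [hYN] at this
      funext g
      exact this (Subgroup.mem_top g)
    have hcomm := comm_trivial_of_codim_le_one (irrRho χ) Y linHom hdist (by
      have : Module.finrank ℂ (irrV χ) = irrDeg χ := rfl
      rw [this]
      have h2 : ∀ l : Lin G, Module.finrank ℂ (wt (irrRho χ) Y (linHom l)) = mult Y (linHom l) χ :=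
        fun _ => rfl
      simp only [h2]
      omega)
    obtain ⟨y₁, h₁, y₂, h₂, hne⟩ := hY
    have hK := hmax ((irrRho χ).ker ⊓ N) inferInstance
      (le_inf (fun m hm => hM m hm) hMN.le) (by
        refine lt_of_le_of_ne inf_le_right fun he => hχ ?_
        intro n hn
        rw [← he] at hn
        exact hn.1)
    apply hne
    rw [← hK]
    refine ⟨hcomm y₁ h₁.1 y₂ h₂.1, ?_⟩
    rw [commutatorElement_def]
    exact N.mul_mem (N.mul_mem (N.mul_mem h₁.2 h₂.2) (N.inv_mem h₁.2)) (N.inv_mem h₂.2)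
  · have : ∀ l : Lin G, mult Y (linHom l) χ = 0 := by
      intro l
      by_contra h0
      obtain ⟨w, hw0, hw⟩ := mult_pos h0
      apply hM
      refine normal_acts_trivially (irrRho χ) M hw0 ?_
      intro m hm
      rw [hw m (hMY hm), hom_trivial _ N hN m (hMN.le hm), one_smul]
    simp only [this, Finset.sum_const_zero]
    omega

theorem lin_nonempty : Nonempty (Lin G) := by
  have : IsIrreducible (1 : Representation ℂ G ℂ) := by
    have h0 : ∀ a : Subrepresentation (1 : Representation ℂ G ℂ), a = ⊥ ∨ a = ⊤ := by
      intro a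
      rcases eq_bot_or_eq_top a.toSubmodule with h | h
      · left; exact Subrepresentation.toSubmodule_injective h
      · right; exact Subrepresentation.toSubmodule_injective h
    have h1 : (⊥ : Subrepresentation (1 : Representation ℂ G ℂ)) ≠ ⊤ := by
      intro h
      have h2 : (⊥ : Submodule ℂ ℂ) = ⊤ := congrArg Subrepresentation.toSubmodule h
      exact bot_ne_top h2
    exact { exists_pair_ne := ⟨⊥, ⊤, h1⟩, eq_bot_or_eq_top := h0 }
  let χ : Irr G := ⟨_, irr_of_irreducible (1 : Representation ℂ G ℂ)⟩
  refine ⟨⟨χ, ?_⟩⟩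
  have h3 := irr_one χ
  have h4 : χ.1 1 = 1 := by simp [χ]
  rw [h4] at h3
  exact_mod_cast h3.symm

open scoped Classical in
theorem rep_main (N M Y : Subgroup G) [N.Normal] [M.Normal] (hN : N ≤ commutator G)
    (hMN : M < N) (hmax : ∀ K : Subgroup G, K.Normal → M ≤ K → K < N → K = M)
    (hMY : M ≤ Y) (hYN : Y ⊔ N = ⊤)
    (hY : ∃ y₁ ∈ Y ⊓ N, ∃ y₂ ∈ Y ⊓ N, ⁅y₁, y₂⁆ ∉ M) (hidx : 2 ≤ Y.index)
    (h : charDegreeSum G ≤ 2 * (Nat.card (ConjClasses G) : ℝ)) :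
    (∃ j : {χ : Irr G // ¬ ∀ n ∈ N, irrRho χ n = 1}, 2 < irrDeg j.1) ∧
    ∀ j : {χ : Irr G // ¬ ∀ n ∈ N, irrRho χ n = 1}, 2 < irrDeg j.1 → irrDeg j.1 = Y.index - 1 := by
  have hsum : ∑ χ : Irr G, irrDeg χ ≤ 2 * Fintype.card (Irr G) := by
    rw [charDegreeSum_eq] at h
    have h1 : ∑ χ : Irr G, irrDeg χ ≤ 2 * Nat.card (ConjClasses G) := by exact_mod_cast h
    have h2 := card_conj_le (G := G)
    omega
  have hLin : Nonempty (Lin G) := by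
    exact lin_nonempty
  refine comb_lemma (fun j : {χ : Irr G // ¬ ∀ n ∈ N, irrRho χ n = 1} => irrDeg j.1)
    (fun (l : Lin G) j => mult Y (linHom l) j.1) Y.index hidx ?_ ?_ ?_
  · intro j
    exact mult_bound N M Y hN hMN hmax hMY hYN hY j.1 j.2
  · intro l
    have h1 := sum_mult Y (linHom l)
    have h2 := Fintype.sum_subtype_add_sum_subtype (fun χ : Irr G => ∀ n ∈ N, irrRho χ n = 1)
      (fun χ => irrDeg χ * mult Y (linHom l) χ)
    have h3 : ∑ χ : {χ : Irr G // ∀ n ∈ N, irrRho χ n = 1}, irrDeg χ.1 * mult Y (linHom l) χ.1 = 1 := by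
      rw [Finset.sum_eq_single (⟨l.1, deg_one_trivial l.1 l.2 N hN⟩ : {χ : Irr G // ∀ n ∈ N, irrRho χ n = 1})]
      · rw [mult_trivial Y N hYN hN l _ (deg_one_trivial l.1 l.2 N hN), if_pos rfl, l.2]
      · intro χ _ hne
        rw [mult_trivial Y N hYN hN l _ χ.2, if_neg (fun he => hne (Subtype.ext he)), mul_zero]
      · simp
    omega
  · have h2 := Fintype.sum_subtype_add_sum_subtype (fun χ : Irr G => ∀ n ∈ N, irrRho χ n = 1)
      (fun χ => irrDeg χ)
    have h4 := Fintype.sum_subtype_add_sum_subtype (fun χ : Irr G => ∀ n ∈ N, irrRho χ n = 1)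
      (fun χ => (2 : ℕ))
    have h5 : ∑ χ : {χ : Irr G // ∀ n ∈ N, irrRho χ n = 1}, 2 ≤
        ∑ χ : {χ : Irr G // ∀ n ∈ N, irrRho χ n = 1}, irrDeg χ.1 + Fintype.card (Lin G) := by
      have h6 : Fintype.card (Lin G) = ∑ χ : {χ : Irr G // ∀ n ∈ N, irrRho χ n = 1},
          if irrDeg χ.1 = 1 then 1 else 0 := by
        have h7 := Fintype.sum_subtype_add_sum_subtype (fun χ : Irr G => ∀ n ∈ N, irrRho χ n = 1)
          (fun χ => if irrDeg χ = 1 then 1 else 0)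
        have h8 : ∑ χ : {χ : Irr G // ¬ ∀ n ∈ N, irrRho χ n = 1}, (if irrDeg χ.1 = 1 then 1 else 0) = 0 := by
          apply Finset.sum_eq_zero
          intro χ _
          rw [if_neg (fun h => χ.2 (deg_one_trivial χ.1 h N hN))]
        have h9 : ∑ χ : Irr G, (if irrDeg χ = 1 then 1 else 0) = Fintype.card (Lin G) := by
          rw [Finset.sum_boole, Fintype.card_subtype]; simp
        omega
      rw [h6, ← Finset.sum_add_distrib]
      apply Finset.sum_le_sum
      intro χ _
      have := one_le_deg χ.1
      split_ifs <;> omega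
    simp only [Finset.sum_const, Finset.card_univ, smul_eq_mul] at h4 h5
    omega
end RepTheory4

theorem solvable_of_degree_sum_le_two_mul_class_number
    (G : Type) [Group G] [Finite G]
    (h : charDegreeSum G ≤ 2 * (Nat.card (ConjClasses G) : ℝ)) :
    IsSolvable G := by
  have : Fintype G := Fintype.ofFinite G
  by_contra hns
  obtain ⟨N, ⟨n, rfl⟩, hNmin⟩ := Set.Finite.exists_minimal (Set.toFinite (Set.range (derivedSeries G)))
    (Set.range_nonempty _)
  have hperf : derivedSeries G (n + 1) = derivedSeries G n := by
    have hle : derivedSeries G (n + 1) ≤ derivedSeries G n := derivedSeries_antitone G (Nat.le_succ n)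
    exact le_antisymm hle (hNmin ⟨n + 1, rfl⟩ hle)
  have hne : derivedSeries G n ≠ ⊥ := fun hb => hns ⟨⟨n, hb⟩⟩
  rw [derivedSeries_succ] at hperf
  have hnorm : (derivedSeries G n).Normal := inferInstance
  generalize derivedSeries G n = N at *
  have hN : N ≤ commutator G := by
    rw [← hperf, commutator_def]
    exact Subgroup.commutator_mono le_top le_top
  obtain ⟨M, ⟨hMn, hMN⟩, hMmax⟩ := Set.Finite.exists_maximal
    (Set.toFinite {K : Subgroup G | K.Normal ∧ K < N}) ⟨⊥, inferInstance, bot_lt_iff_ne_bot.2 hne⟩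
  have hmax : ∀ K : Subgroup G, K.Normal → M ≤ K → K < N → K = M := by
    intro K hK hMK hKN
    exact le_antisymm (hMmax ⟨hK, hKN⟩ hMK) hMK
  have hgt := gt_main G N M hperf hMN hmax
  have hrel : M.relIndex N ≠ 1 := by
    rw [Ne, Subgroup.relIndex_eq_one]
    exact fun hle => absurd hMN (not_lt_of_ge hle)
  obtain ⟨p, hp, hpd⟩ := Nat.exists_prime_and_dvd hrel
  obtain ⟨Y, hMY, hYN, h2, hd, hnd, hc⟩ := hgt p hp hpd
  obtain ⟨q, hq, hqd⟩ := Nat.exists_prime_and_dvd (by omega : Y.index ≠ 1)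
  obtain ⟨Z, hMZ, hZN, h2', hd', hnd', hc'⟩ := hgt q hq (hqd.trans hd)
  obtain ⟨⟨j, hj⟩, hall⟩ := rep_main N M Y hN hMN hmax hMY hYN hc h2 h
  obtain ⟨-, hall'⟩ := rep_main N M Z hN hMN hmax hMZ hZN hc' h2' h
  have e1 := hall j hj
  have e2 := hall' j hj
  have : Y.index = Z.index := by omega
  exact hnd' (this ▸ hqd)
end
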